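/- Let s, α ∈ ℕ with α ≥ 2, let β, g ∈ ℕ with β ≥ 2α, g ≥ 2αs and g ≥ ⌊s(β−1)/2⌋, and let b ≥ βgs be a prime. Then there exists a constant A > 0 (depending only on α, β, b, s) such that for every w ∈ ℕ, the digital net P ⊂ [0,1)^s of the paper's construction, of cardinality N = b^{gw}, satisfies ∑_{k,l ∈ P⊥ \ {0}} |K̂_{α,s}(k,l)| ≤ A · (log N)^{s−1} / N^{2α}. -/

import Mathlib

/-!
The proof has an algebraic half about the dual net and an analytic half about the kernel.

**Off-diagonal terms.** By self-similarity of the Walsh functions, removing the lowest digits of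
`k` and `l` expresses a Walsh coefficient through coefficients at `(⌊k/b⌋, ⌊l/b⌋)`. For the monomial
`x ^ p` the recursion shows that the coefficient at `k` vanishes when `k` has more than `p` nonzero
digits (`mom_zero`); for `|x - y| ^ n` the squares off the diagonal contribute polynomials and the
diagonal squares contribute only if the lowest digits agree, so the coefficient at `(k, l)` vanishes
when `k` and `l` differ in more than `n + 1` digits (`absD_zero`). Hence the kernel coefficient
vanishes when `k` and `l` differ in more than `2α` digits (`Khat_zero`). On the other hand, the rows
of the Chen–Skriganov matrices are coefficient vectors of Hasse derivatives at distinct nodes, and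
Hermite interpolation (`hermite`) makes any `g` of them independent, so two elements of the dual net
differing in at most `g` digits coincide (`dual_eq_of_hamming`). As `2αs ≤ g`, only the diagonal
terms `k = l` of the double sum survive.

**Diagonal terms.** The same recursions give `|K̂_α(k,k)| ≤ C b^{-2μ_α(k)}` (`Khat_diag_bound`); the
odd power `2α - 1` of `|x - y|` is the critical one (`absD_diag_bound`), and the lower odd
powers do not occur since the corresponding Bernoulli numbers vanish. It remains to bound
`∑ b^{-2μ_α(k)}` over the nonzero dual net (`dual_sum_bound`). Hermite interpolation also gives
`μ_1(k) ≥ gw` and `μ_β(k) ≥ βgw - sβ²` for nonzero dual `k`, and at most `b^{z}` dual elements in a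
box of volume `b^{gw + z}`. Concavity of `α ↦ μ_α(k)` and `β ≥ 2α` then yield
`2μ_α(k) ≥ 2αgw + (1 + 1/(β-1)) z - const` for `μ_1(k) = gw + z`, so the sum over `z` converges
geometrically, with a factor `(gw)^{s-1}` from the number of vectors of leading positions.
-/

open scoped BigOperators

/-- The `i`-th digit (starting from `i = 0`) of the `b`-adic expansion of `k`. -/
def bdigit (b k i : ℕ) : ℕ := k / b ^ i % b

/-- The set of indices of nonzero `b`-adic digits of `k`. -/
def bsupp (b k : ℕ) : Finset ℕ := (Finset.range (k + 1)).filter fun i => bdigit b k i ≠ 0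

/-- The Hamming metric `κ(k)`: the number of nonzero `b`-adic digits of `k`. -/
def hamming (b k : ℕ) : ℕ := (bsupp b k).card

/-- The Dick metric `μ_α(k)`: the sum of the `min(v, α)` largest exponents-plus-one
`a_1 > a_2 > ⋯` of the nonzero `b`-adic digits of `k`. -/
def dick (b α k : ℕ) : ℕ := ((((bsupp b k).sort (· ≤ ·)).reverse.take α).map (· + 1)).sum

/-- Digitwise addition `k ⊕ l` modulo `b` of the `b`-adic digits. -/
def dadd (b k l : ℕ) : ℕ :=
  ∑ i ∈ Finset.range (k + l + 1), (bdigit b k i + bdigit b l i) % b * b ^ i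

/-- Digitwise subtraction `k ⊖ l` modulo `b` of the `b`-adic digits. -/
def dsub (b k l : ℕ) : ℕ :=
  ∑ i ∈ Finset.range (k + l + 1), (bdigit b k i + (b - bdigit b l i)) % b * b ^ i

/-- Hamming metric of a vector: sum over coordinates. -/
def hammingVec (b : ℕ) {s : ℕ} (k : Fin s → ℕ) : ℕ := ∑ j, hamming b (k j)

/-- Dick metric of a vector: sum over coordinates. -/
def dickVec (b α : ℕ) {s : ℕ} (k : Fin s → ℕ) : ℕ := ∑ j, dick b α (k j)

/-- The column vector of the first `n` `b`-adic digits of `k`, as a vector over `F_b = ZMod b`. -/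
def trv (b n : ℕ) (k : ℕ) : Fin n → ZMod b := fun i => (bdigit b k i.1 : ZMod b)

/-- The dual net `P⊥` of the digital net with generating matrices `C`. -/
def dualNet (b : ℕ) {s n m : ℕ} (C : Fin s → Matrix (Fin n) (Fin m) (ZMod b)) :
    Set (Fin s → ℕ) :=
  {k | (∀ j, k j < b ^ n) ∧ ∑ j, ((C j).transpose).mulVec (trv b n (k j)) = 0}

/-- The dual net `P∞⊥` of the digital net with generating matrices `C` (no upper bound
on the components of `k`). -/
def dualNetInf (b : ℕ) {s n m : ℕ} (C : Fin s → Matrix (Fin n) (Fin m) (ZMod b)) :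
    Set (Fin s → ℕ) :=
  {k | ∑ j, ((C j).transpose).mulVec (trv b n (k j)) = 0}

/-- The `h`-th point of the digital net generated by the matrices `C` over `ZMod b`:
its `j`-th coordinate is `∑_{i=1}^n ξ_i b^{-i}` with `(ξ_1,…,ξ_n)ᵀ = C_j · (η_0,…,η_{m-1})ᵀ`,
where `η` are the `b`-adic digits of `h`. -/
noncomputable def netPoint (b : ℕ) {s n m : ℕ} (C : Fin s → Matrix (Fin n) (Fin m) (ZMod b))
    (h : ℕ) : Fin s → ℝ :=
  fun j => ∑ i : Fin n,
    (((C j).mulVec (fun v : Fin m => (bdigit b h v.1 : ZMod b)) i).val : ℝ) / (b : ℝ) ^ (i.1 + 1)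

/-- Sum of the `α` largest elements of a finite set of (0-based) row indices, counted
1-based, i.e. each index `i` contributes `i + 1`. -/
def topSum (α : ℕ) (R : Finset ℕ) : ℕ := (((R.sort (· ≤ ·)).reverse.take α).map (· + 1)).sum

/-- The digital net with generating matrices `C_1,…,C_s ∈ F_b^{n×m}` is an order `α`
digital `(t,m,s)`-net: for every choice of rows `i_{j,v_j} < ⋯ < i_{j,1}` from each `C_j`
such that the 1-based indices of the `min(α, v_j)` largest chosen rows of each matrix sum
to at most `αm - t`, the chosen rows are linearly independent over `F_b`. -/
def isOrderNet (b α t m : ℕ) {s n : ℕ} (C : Fin s → Matrix (Fin n) (Fin m) (ZMod b)) : Prop :=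
  ∀ R : Fin s → Finset (Fin n),
    (∑ j, topSum α ((R j).image Fin.val)) ≤ α * m - t →
    LinearIndependent (ZMod b) fun p : Σ j : Fin s, {i : Fin n // i ∈ R j} => C p.1 p.2.1

/-- The minimum Dick metric `μ_α(P)` of the digital net with generating matrices `C`,
namely the minimum of `μ_α(k)` over nonzero elements `k` of the dual net. -/
noncomputable def minDick (b α : ℕ) {s n m : ℕ}
    (C : Fin s → Matrix (Fin n) (Fin m) (ZMod b)) : ℕ :=
  sInf (dickVec b α '' {k | k ∈ dualNet b C ∧ k ≠ 0})

/-- The minimum Hamming metric `κ(P)` of the digital net with generating matrices `C`. -/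
noncomputable def minHamming (b : ℕ) {s n m : ℕ}
    (C : Fin s → Matrix (Fin n) (Fin m) (ZMod b)) : ℕ :=
  sInf (hammingVec b '' {k | k ∈ dualNet b C ∧ k ≠ 0})

/-- The Chen–Skriganov generating matrix (for one coordinate `j`, with row parameters
`βr l = β_{j,l}`): the entry in (1-based) row `u = (l-1)w + i` and column `v` is
`binom(v-1, i-1) · β_{j,l}^{v-i}` (which vanishes when `v < i` since the binomial
coefficient is `0`). Indices here are 0-based. -/
def csMatrix (b w n : ℕ) (βr : ℕ → ZMod b) : Matrix (Fin n) (Fin n) (ZMod b) :=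
  Matrix.of fun u v =>
    (Nat.choose v.1 (u.1 % w) : ZMod b) * βr (u.1 / w) ^ (v.1 - u.1 % w)

/-- Dick's digit interlacing composition with interlacing factor `α` applied to the
generating matrices `C_1,…,C_{αs} ∈ F_b^{m×m}`: the resulting matrices
`D_1,…,D_s ∈ F_b^{αm×m}` are such that the (1-based) `(α(h-1)+i)`-th row of `D_j` is the
`h`-th row of `C_{α(j-1)+i}`. -/
def interlace {R : Type*} (α s m : ℕ) (C : Fin (α * s) → Matrix (Fin m) (Fin m) R) :
    Fin s → Matrix (Fin (α * m)) (Fin m) R :=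
  fun j => Matrix.of fun r v =>
    C ⟨α * j.1 + r.1 % α, by
        have hα : 0 < α := by
          rcases Nat.eq_zero_or_pos α with h | h
          · exact absurd r.2 (by simp [h])
          · exact h
        have h1 : α * (j.1 + 1) ≤ α * s := Nat.mul_le_mul_left α j.2
        have h2 : α * (j.1 + 1) = α * j.1 + α := by ring
        have h3 : r.1 % α < α := Nat.mod_lt _ hα
        omega⟩
      ⟨r.1 / α, by
        have hα : 0 < α := by
          rcases Nat.eq_zero_or_pos α with h | h
          · exact absurd r.2 (by simp [h])
          · exact h
        exact Nat.div_lt_of_lt_mul r.2⟩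
      v

open MeasureTheory

/-- The `i`-th (for `i ≥ 1`) `b`-adic digit `ξ_i` of a real number `x ∈ [0,1)`, using the
expansion in which infinitely many digits differ from `b - 1`. -/
noncomputable def rdigit (b : ℕ) (x : ℝ) (i : ℕ) : ℤ := ⌊x * (b : ℝ) ^ i⌋ % b

/-- The `k`-th `b`-adic Walsh function, `wal_k(x) = ω_b^{κ_0 ξ_1 + κ_1 ξ_2 + ⋯}` where
`ω_b = exp(2π√-1/b)`, `κ` are the `b`-adic digits of `k` and `ξ` those of `x`. -/
noncomputable def walsh (b k : ℕ) (x : ℝ) : ℂ :=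
  Complex.exp (2 * (Real.pi : ℂ) * Complex.I / (b : ℂ) *
    ∑ a ∈ Finset.range (k + 1), (bdigit b k a : ℂ) * (rdigit b x (a + 1) : ℂ))

/-- The `k`-th `b`-adic Walsh function on `[0,1)^s`, `wal_k(x) = ∏_j wal_{k_j}(x_j)`. -/
noncomputable def walshVec (b : ℕ) {s : ℕ} (k : Fin s → ℕ) (x : Fin s → ℝ) : ℂ :=
  ∏ j, walsh b (k j) (x j)

/-- The Bernoulli polynomial `B_r` evaluated at a real number. -/
noncomputable def bernoulliPoly (r : ℕ) (x : ℝ) : ℝ := Polynomial.aeval x (Polynomial.bernoulli r)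

/-- The reproducing kernel `K_α` of the Sobolev space `H_α`:
`K_α(x,y) = ∑_{r=0}^{α} B_r(x)B_r(y)/(r!)² + (-1)^{α+1} B_{2α}(|x-y|)/(2α)!`. -/
noncomputable def Kker (α : ℕ) (x y : ℝ) : ℝ :=
  ∑ r ∈ Finset.range (α + 1), bernoulliPoly r x * bernoulliPoly r y / ((r.factorial : ℝ)) ^ 2
    + (-1 : ℝ) ^ (α + 1) * bernoulliPoly (2 * α) |x - y| / ((2 * α).factorial : ℝ)

/-- The `(k,l)`-th Walsh coefficient of the kernel `K_α`. -/
noncomputable def Khat (b α : ℕ) (k l : ℕ) : ℂ :=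
  ∫ x in Set.Ico (0 : ℝ) 1, ∫ y in Set.Ico (0 : ℝ) 1,
    (Kker α x y : ℂ) * (starRingEnd ℂ) (walsh b k x) * walsh b l y

/-- The `(k,l)`-th Walsh coefficient of the `s`-variate kernel
`K_{α,s}(x,y) = ∏_j K_α(x_j, y_j)`. -/
noncomputable def KhatS (b α s : ℕ) (k l : Fin s → ℕ) : ℂ :=
  ∫ x in Set.univ.pi fun _ : Fin s => Set.Ico (0 : ℝ) 1,
    ∫ y in Set.univ.pi fun _ : Fin s => Set.Ico (0 : ℝ) 1,
      ((∏ j, Kker α (x j) (y j) : ℝ) : ℂ) * (starRingEnd ℂ) (walshVec b k x) * walshVec b l y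

/-- The `k`-th Walsh coefficient `b̂_r(k)` of the normalized Bernoulli polynomial `B_r/r!`. -/
noncomputable def bhat (b r k : ℕ) : ℂ :=
  ∫ x in Set.Ico (0 : ℝ) 1,
    ((bernoulliPoly r x / (r.factorial : ℝ) : ℝ) : ℂ) * (starRingEnd ℂ) (walsh b k x)

/-- The `(k,l)`-th Walsh coefficient `b̂_{r,per}(k,l)` of `(x,y) ↦ B̃_r(x-y)/r!`, where
`B̃_r` is the 1-periodic extension of the Bernoulli polynomial `B_r` from `[0,1)` to `ℝ`. -/
noncomputable def bhatPer (b r : ℕ) (k l : ℕ) : ℂ :=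
  ∫ x in Set.Ico (0 : ℝ) 1, ∫ y in Set.Ico (0 : ℝ) 1,
    ((bernoulliPoly r (Int.fract (x - y)) / (r.factorial : ℝ) : ℝ) : ℂ) *
      (starRingEnd ℂ) (walsh b k x) * walsh b l y

/-! ### Hermite interpolation with Hasse derivatives -/

open Polynomial in
/-- Hasse derivatives of a polynomial at a root `q` of multiplicity at least `e` vanish below
order `e`. -/
lemma hasse_eval_of_dvd {F : Type*} [Field F] (q : F) (e k : ℕ) (h : F[X]) :
    (hasseDeriv k ((X - C q) ^ e * h)).eval q =
      if e ≤ k then (taylor q h).coeff (k - e) else 0 := by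
  rw [← taylor_coeff, taylor_mul, taylor_pow]
  simp [coeff_X_pow_mul']

open Polynomial in
lemma hasse_eval_eq_sum {F : Type*} [Field F] (f : F[X]) (m k : ℕ) (hf : f.natDegree < m) (x : F) :
    (hasseDeriv k f).eval x =
      ∑ v ∈ Finset.range m, f.coeff v * ((Nat.choose v k : F) * x ^ (v - k)) := by
  rw [hasseDeriv_apply, Polynomial.sum_over_range' _ _ m hf, Polynomial.eval_finsetSum]
  · refine Finset.sum_congr rfl fun v _ => ?_
    rw [eval_monomial]; ring
  · intro n; simp

open Polynomial in
/-- Hermite interpolation: the functionals `f ↦ f^{[ord i]}(pt i)` (Hasse derivatives) on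
polynomials of degree `< m` are linearly independent if the orders at each node `q` are
below `e q` and `∑ e q ≤ m`. The relation is tested on the polynomial
`(X - p)^{ord i₀} ∏_{q ≠ p} (X - q)^{e q}`, where `i₀` has maximal order among the indices
with nonzero coefficient and `p` is its node. -/
lemma hermite {F : Type*} [Field F] [DecidableEq F] {ι : Type*} (S : Finset ι) (pt : ι → F)
    (ord : ι → ℕ)
    (hinj : ∀ i ∈ S, ∀ i' ∈ S, pt i = pt i' → ord i = ord i' → i = i') (e : F → ℕ)
    (he : ∀ i ∈ S, ord i < e (pt i)) (m : ℕ) (hm : ∑ q ∈ S.image pt, e q ≤ m) (c : ι → F)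
    (hc : ∀ v < m, ∑ i ∈ S, c i * ((Nat.choose v (ord i) : F) * pt i ^ (v - ord i)) = 0) :
    ∀ i ∈ S, c i = 0 := by
  classical
  have key : ∀ f : F[X], f.natDegree < m →
      ∑ i ∈ S, c i * (hasseDeriv (ord i) f).eval (pt i) = 0 := by
    intro f hf
    simp_rw [hasse_eval_eq_sum f m _ hf, Finset.mul_sum]
    rw [Finset.sum_comm]
    refine Finset.sum_eq_zero fun v hv => ?_
    rw [← mul_zero (f.coeff v), ← hc v (Finset.mem_range.1 hv), Finset.mul_sum]
    exact Finset.sum_congr rfl fun i _ => by ring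
  by_contra! hne
  obtain ⟨i1, hi1, hi1'⟩ := hne
  obtain ⟨i0, hi0, hmax⟩ := Finset.exists_max_image (S.filter fun i => c i ≠ 0) ord
    ⟨i1, by simp [hi1, hi1']⟩
  obtain ⟨hi0S, hc0⟩ := Finset.mem_filter.1 hi0
  set p := pt i0 with hp
  set h : F[X] := ∏ q ∈ (S.image pt).erase p, (X - C q) ^ e q with hh
  have hpm : p ∈ S.image pt := Finset.mem_image_of_mem _ hi0S
  have hdeg : ((X - C p) ^ ord i0 * h).natDegree < m := by
    have h1 : h.natDegree ≤ ∑ q ∈ (S.image pt).erase p, e q := by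
      refine (natDegree_prod_le _ _).trans (Finset.sum_le_sum fun q _ => ?_)
      simp
    have h2 := Finset.add_sum_erase _ e hpm
    have h3 : ord i0 < e p := he i0 hi0S
    have h4 : ((X - C p) ^ ord i0 * h).natDegree ≤ ord i0 + h.natDegree :=
      natDegree_mul_le.trans (by simp)
    omega
  have h0 := key _ hdeg
  rw [Finset.sum_eq_single_of_mem i0 hi0S] at h0
  · rw [← hp, hasse_eval_of_dvd] at h0
    have : (taylor p h).coeff 0 ≠ 0 := by
      rw [taylor_coeff_zero, hh, eval_prod, Finset.prod_ne_zero_iff]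
      intro q hq
      have : p ≠ q := fun h => (Finset.mem_erase.1 hq).1 h.symm
      simp [sub_ne_zero.2 this]
    rw [if_pos le_rfl, Nat.sub_self] at h0
    exact mul_ne_zero hc0 this h0
  · intro i hi hne
    by_cases hci : c i = 0
    · simp [hci]
    have hle : ord i ≤ ord i0 := hmax i (by simp [hi, hci])
    by_cases hpi : pt i = p
    · have : ord i ≠ ord i0 := fun h => hne (hinj i hi i0 hi0S hpi h)
      rw [hpi, hasse_eval_of_dvd, if_neg (by omega), mul_zero]
    · have hmem : pt i ∈ (S.image pt).erase p :=
        Finset.mem_erase.2 ⟨hpi, Finset.mem_image_of_mem _ hi⟩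
      have h1 : (X - C p) ^ ord i0 * h = (X - C (pt i)) ^ e (pt i) *
          ((X - C p) ^ ord i0 * ∏ q ∈ ((S.image pt).erase p).erase (pt i), (X - C q) ^ e q) := by
        rw [hh, ← Finset.mul_prod_erase _ _ hmem]; ring
      rw [h1, hasse_eval_of_dvd, if_neg (by have := he i hi; omega), mul_zero]

/-! ### Independence of rows of the interlaced matrices -/

/-- The interpolation node attached to row `r` of the `j`-th interlaced matrix. -/
def nodeOf (b β w : ℕ) (βe : ℕ → ℕ → ZMod b) {s : ℕ} (i : Fin s × ℕ) : ZMod b :=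
  βe (β * i.1.1 + i.2 % β) (i.2 / β / w)

/-- The order of the Hasse derivative attached to row `r` of an interlaced matrix. -/
def ordOf (β w : ℕ) {s : ℕ} (i : Fin s × ℕ) : ℕ := i.2 / β % w

lemma node_inj {b s β g w : ℕ} (hβ : 0 < β) {βe : ℕ → ℕ → ZMod b}
    (hdist : ∀ j l j' l', j < β * s → l < g → j' < β * s → l' < g →
      βe j l = βe j' l' → j = j' ∧ l = l')
    (i i' : Fin s × ℕ) (hi : i.2 < β * (g * w)) (hi' : i'.2 < β * (g * w))
    (h1 : nodeOf b β w βe i = nodeOf b β w βe i') (h2 : ordOf β w i = ordOf β w i') : i = i' := by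
  have aux : ∀ i : Fin s × ℕ, i.2 < β * (g * w) →
      β * i.1.1 + i.2 % β < β * s ∧ i.2 / β / w < g := by
    intro i hi
    constructor
    · have := Nat.mod_lt i.2 hβ
      have h3 : β * (i.1.1 + 1) ≤ β * s := Nat.mul_le_mul_left _ i.1.2
      rw [Nat.mul_add] at h3
      omega
    · have h3 : i.2 / β < g * w := Nat.div_lt_of_lt_mul hi
      exact Nat.div_lt_of_lt_mul (by rwa [mul_comm])
  obtain ⟨ha, hb⟩ := aux i hi
  obtain ⟨ha', hb'⟩ := aux i' hi'
  obtain ⟨h3, h4⟩ := hdist _ _ _ _ ha hb ha' hb' h1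
  have e1 : i.1.1 = i'.1.1 := by
    have := congrArg (· / β) h3
    simpa [Nat.mul_add_div hβ, Nat.div_eq_of_lt (Nat.mod_lt _ hβ)] using this
  have e2 : i.2 % β = i'.2 % β := by rw [e1] at h3; omega
  have e3 : i.2 / β = i'.2 / β := by
    rw [← Nat.div_add_mod (i.2 / β) w, ← Nat.div_add_mod (i'.2 / β) w, h4]
    unfold ordOf at h2
    rw [h2]
  refine Prod.ext (Fin.ext e1) ?_
  rw [← Nat.div_add_mod i.2 β, ← Nat.div_add_mod i'.2 β, e2, e3]

/-- Any `g` rows of the interlaced matrices are independent: they involve at most `g` nodes, and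
each node needs multiplicity at most `w`. -/
lemma hamming_vanish {b s β g w : ℕ} [Fact b.Prime] (hβ : 0 < β) (hw : 0 < w)
    {βe : ℕ → ℕ → ZMod b}
    (hdist : ∀ j l j' l', j < β * s → l < g → j' < β * s → l' < g →
      βe j l = βe j' l' → j = j' ∧ l = l')
    (S : Finset (Fin s × ℕ)) (hS : ∀ i ∈ S, i.2 < β * (g * w)) (hcard : S.card ≤ g)
    (c : Fin s × ℕ → ZMod b)
    (hc : ∀ v < g * w, ∑ i ∈ S, c i * ((Nat.choose v (ordOf β w i) : ZMod b) *
      nodeOf b β w βe i ^ (v - ordOf β w i)) = 0) : ∀ i ∈ S, c i = 0 := by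
  refine hermite S (nodeOf b β w βe) (ordOf β w) ?_ (fun _ => w) ?_ (g * w) ?_ c hc
  · intro i hi i' hi' h1 h2
    exact node_inj hβ hdist i i' (hS i hi) (hS i' hi') h1 h2
  · intro i _
    exact Nat.mod_lt _ hw
  · rw [Finset.sum_const, smul_eq_mul]
    exact Nat.mul_le_mul_right _ (Finset.card_image_le.trans hcard)

/-- At most `g * w` rows are independent if they form initial segments of the matrices before
interlacing: the multiplicities at the nodes then add up to the number of rows. -/
lemma down_vanish {b s β g w : ℕ} [Fact b.Prime] (hβ : 0 < β)
    {βe : ℕ → ℕ → ZMod b}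
    (hdist : ∀ j l j' l', j < β * s → l < g → j' < β * s → l' < g →
      βe j l = βe j' l' → j = j' ∧ l = l')
    (S : Finset (Fin s × ℕ)) (hS : ∀ i ∈ S, i.2 < β * (g * w)) (hcard : S.card ≤ g * w)
    (hdown : ∀ j r, (j, r + β) ∈ S → (j, r) ∈ S)
    (c : Fin s × ℕ → ZMod b)
    (hc : ∀ v < g * w, ∑ i ∈ S, c i * ((Nat.choose v (ordOf β w i) : ZMod b) *
      nodeOf b β w βe i ^ (v - ordOf β w i)) = 0) : ∀ i ∈ S, c i = 0 := by
  have hdown' : ∀ j r d, (j, r + β * d) ∈ S → (j, r) ∈ S := by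
    intro j r d
    induction d with
    | zero => simp
    | succ d ih =>
      intro h
      exact ih (hdown _ _ (by rwa [Nat.mul_succ, ← add_assoc] at h))
  refine hermite S (nodeOf b β w βe) (ordOf β w) ?_
    (fun q => (S.filter fun i => nodeOf b β w βe i = q).card) ?_ (g * w) ?_ c hc
  · intro i hi i' hi' h1 h2
    exact node_inj hβ hdist i i' (hS i hi) (hS i' hi') h1 h2
  · rintro ⟨j, r⟩ hi
    have hr := hS _ hi
    have hw : 0 < w := by
      rcases Nat.eq_zero_or_pos w with h | h
      · simp [h] at hr
      · exact h
    set l := r / β / w with hl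
    set o := r / β % w with ho
    have how : o < w := Nat.mod_lt _ hw
    have hrr : r = β * (w * l + o) + r % β := by
      rw [hl, ho, Nat.div_add_mod, Nat.div_add_mod]
    have hmodlt := Nat.mod_lt r hβ
    -- the rows with the same node and smaller order all lie in `S`
    have : ∀ o' ∈ Finset.range (o + 1), (j, β * (w * l + o') + r % β) ∈
        S.filter fun i => nodeOf b β w βe i = nodeOf b β w βe (j, r) := by
      intro o' ho'
      have ho'' : o' ≤ o := by simpa [Nat.lt_succ_iff] using ho'
      refine Finset.mem_filter.2 ⟨hdown' _ _ (o - o') ?_, ?_⟩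
      · convert hi using 2
        conv_rhs => rw [hrr]
        have : o = o' + (o - o') := by omega
        conv_rhs => rw [this]
        ring
      · unfold nodeOf
        congr 1
        · simp
        · simp only
          rw [Nat.mul_add_div hβ, Nat.div_eq_of_lt hmodlt, add_zero, Nat.mul_add_div hw,
            Nat.div_eq_of_lt (by omega : o' < w), add_zero]
    have hcard := Finset.card_le_card_of_injOn _ this (by
      intro x _ y _ hxy
      simp only [Prod.mk.injEq, true_and] at hxy
      have := Nat.eq_of_mul_eq_mul_left hβ (Nat.add_right_cancel hxy)
      omega)
    rw [Finset.card_range] at hcard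
    exact hcard
  · exact (Finset.card_eq_sum_card_image _ _).symm.le.trans hcard

lemma bdigit_lt {b : ℕ} (hb : 0 < b) (k i : ℕ) : bdigit b k i < b := Nat.mod_lt _ hb

lemma bdigit_succ (b k i : ℕ) : bdigit b k (i + 1) = bdigit b (k / b) i := by
  unfold bdigit
  rw [Nat.pow_succ', Nat.div_div_eq_div_mul]

lemma eq_of_bdigit {b : ℕ} (n : ℕ) : ∀ k l : ℕ, k < b ^ n → l < b ^ n →
    (∀ i < n, bdigit b k i = bdigit b l i) → k = l := by
  induction n with
  | zero => intro k l hk hl _; simp at hk hl; omega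
  | succ n ih =>
    intro k l hk hl h
    have h0 : k % b = l % b := by simpa [bdigit] using h 0 (by omega)
    have h1 : k / b = l / b := by
      refine ih _ _ (Nat.div_lt_of_lt_mul (by rwa [← Nat.pow_succ'])) 
        (Nat.div_lt_of_lt_mul (by rwa [← Nat.pow_succ'])) fun i hi => ?_
      rw [← bdigit_succ, ← bdigit_succ]
      exact h (i + 1) (by omega)
    rw [← Nat.div_add_mod k b, ← Nat.div_add_mod l b, h0, h1]

/-- The linear relation between Hasse derivatives encoded by a difference of two elements of
the dual net. -/
lemma dual_relation {b s β g w : ℕ} {βe : ℕ → ℕ → ZMod b} (k l : Fin s → ℕ)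
    (hk : k ∈ dualNet b (interlace β s (g * w) fun j => csMatrix b w (g * w) (βe j.1)))
    (hl : l ∈ dualNet b (interlace β s (g * w) fun j => csMatrix b w (g * w) (βe j.1)))
    (S : Finset (Fin s × ℕ)) (hS : ∀ i ∈ S, i.2 < β * (g * w))
    (hS' : ∀ j r, r < β * (g * w) → bdigit b (k j) r ≠ bdigit b (l j) r → (j, r) ∈ S) :
    ∀ v < g * w, ∑ i ∈ S, ((bdigit b (k i.1) i.2 : ZMod b) - (bdigit b (l i.1) i.2 : ZMod b)) *
      ((Nat.choose v (ordOf β w i) : ZMod b) *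
      nodeOf b β w βe i ^ (v - ordOf β w i)) = 0 := by
  intro v hv
  have h1 : ∀ k : Fin s → ℕ,
      k ∈ dualNet b (interlace β s (g * w) fun j => csMatrix b w (g * w) (βe j.1)) →
      ∑ i ∈ Finset.univ ×ˢ Finset.range (β * (g * w)), (bdigit b (k i.1) i.2 : ZMod b) *
      ((Nat.choose v (ordOf β w i) : ZMod b) *
      nodeOf b β w βe i ^ (v - ordOf β w i)) = 0 := by
    intro k hk
    have := congrFun hk.2 ⟨v, hv⟩
    rw [Finset.sum_apply] at this
    rw [Finset.sum_product, ← this.trans (Pi.zero_apply _)]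
    refine Finset.sum_congr rfl fun j _ => ?_
    rw [Finset.sum_range]
    simp only [Matrix.mulVec, dotProduct, Matrix.transpose_apply]
    refine Finset.sum_congr rfl fun r _ => ?_
    rw [mul_comm]
    rfl
  have h2 := h1 k hk
  have h3 := h1 l hl
  rw [← sub_self (0 : ZMod b)]
  nth_rewrite 1 [← h2]
  rw [← h3, ← Finset.sum_sub_distrib]
  simp_rw [← sub_mul]
  refine Finset.sum_subset ?_ ?_
  · intro i hi
    simp [hS i hi]
  · intro i hi hi'
    have : bdigit b (k i.1) i.2 = bdigit b (l i.1) i.2 := by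
      by_contra hne
      exact hi' (hS' i.1 i.2 (by simpa using hi) hne)
    rw [this]; ring

lemma cast_sub_eq_zero {b : ℕ} (hb : 0 < b) (k l i : ℕ)
    (h : (bdigit b k i : ZMod b) - (bdigit b l i : ZMod b) = 0) : bdigit b k i = bdigit b l i := by
  rw [sub_eq_zero, ZMod.natCast_eq_natCast_iff] at h
  exact Nat.ModEq.eq_of_lt_of_lt h (bdigit_lt hb _ _) (bdigit_lt hb _ _)

/-- Two elements of the dual net are equal if they differ only at positions in a small set `S`
that is an initial segment in every residue class modulo `β`. -/
lemma dual_eq_of_down {b s β g w : ℕ} (hb : b.Prime) (hβ : 0 < β) {βe : ℕ → ℕ → ZMod b}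
    (hdist : ∀ j l j' l', j < β * s → l < g → j' < β * s → l' < g →
      βe j l = βe j' l' → j = j' ∧ l = l') (k l : Fin s → ℕ)
    (hk : k ∈ dualNet b (interlace β s (g * w) fun j => csMatrix b w (g * w) (βe j.1)))
    (hl : l ∈ dualNet b (interlace β s (g * w) fun j => csMatrix b w (g * w) (βe j.1)))
    (S : Finset (Fin s × ℕ)) (hS : ∀ i ∈ S, i.2 < β * (g * w)) (hcard : S.card ≤ g * w)
    (hdown : ∀ j r, (j, r + β) ∈ S → (j, r) ∈ S)
    (hS' : ∀ j r, r < β * (g * w) → bdigit b (k j) r ≠ bdigit b (l j) r → (j, r) ∈ S) :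
    k = l := by
  have := Fact.mk hb
  have := down_vanish hβ hdist S hS hcard hdown _ (dual_relation k l hk hl S hS hS')
  funext j
  refine eq_of_bdigit _ _ _ (hk.1 j) (hl.1 j) fun r hr => ?_
  by_contra hne
  exact hne (cast_sub_eq_zero hb.pos _ _ _ (this (j, r) (hS' j r hr hne)))

/-- Two elements of the dual net with Hamming distance at most `g` are equal. -/
lemma dual_eq_of_hamming {b s β g w : ℕ} (hb : b.Prime) (hβ : 0 < β) (hw : 0 < w)
    {βe : ℕ → ℕ → ZMod b}
    (hdist : ∀ j l j' l', j < β * s → l < g → j' < β * s → l' < g →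
      βe j l = βe j' l' → j = j' ∧ l = l') (k l : Fin s → ℕ)
    (hk : k ∈ dualNet b (interlace β s (g * w) fun j => csMatrix b w (g * w) (βe j.1)))
    (hl : l ∈ dualNet b (interlace β s (g * w) fun j => csMatrix b w (g * w) (βe j.1)))
    (hcard : ∑ j, ((Finset.range (β * (g * w))).filter
      fun r => bdigit b (k j) r ≠ bdigit b (l j) r).card ≤ g) :
    k = l := by
  have := Fact.mk hb
  set S : Finset (Fin s × ℕ) := (Finset.univ ×ˢ Finset.range (β * (g * w))).filter
    fun i => bdigit b (k i.1) i.2 ≠ bdigit b (l i.1) i.2 with hSdef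
  have hS : ∀ i ∈ S, i.2 < β * (g * w) := by
    intro i hi
    rw [hSdef] at hi
    simp at hi
    exact hi.1
  have hS' : ∀ j r, r < β * (g * w) → bdigit b (k j) r ≠ bdigit b (l j) r → (j, r) ∈ S := by
    intro j r hr hne
    rw [hSdef]; simp [hr, hne]
  have hScard : S.card ≤ g := by
    refine le_trans (le_of_eq ?_) hcard
    rw [hSdef, Finset.card_filter, Finset.sum_product]
    exact Finset.sum_congr rfl fun j _ => (Finset.card_filter _ _).symm
  have := hamming_vanish hβ hw hdist S hS hScard _ (dual_relation k l hk hl S hS hS')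
  funext j
  refine eq_of_bdigit _ _ _ (hk.1 j) (hl.1 j) fun r hr => ?_
  by_contra hne
  exact hne (cast_sub_eq_zero hb.pos _ _ _ (this (j, r) (hS' j r hr hne)))

/-! ### Digit metrics -/

/-- The Hamming distance of the first `n` digits of `k` and `l`. -/
def hd (b n k l : ℕ) : ℕ := ((Finset.range n).filter fun r => bdigit b k r ≠ bdigit b l r).card

/-- The number of nonzero digits among the first `n` digits of `k`. -/
def kap (b n k : ℕ) : ℕ := ((Finset.range n).filter fun r => bdigit b k r ≠ 0).card

/-- The sum of the positions (counted from `1`) of all nonzero digits among the first `n`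
digits of `k`, written as `∑_a κ(⌊k / b^a⌋)`. -/
def muF (b : ℕ) : ℕ → ℕ → ℕ
  | 0, _ => 0
  | n + 1, k => kap b (n + 1) k + muF b n (k / b)

/-- The Dick metric `μ_α(k)` of a number `k` with at most `n` digits, written as
`∑_a min(α, κ(⌊k / b^a⌋))`. -/
def mu (b α : ℕ) : ℕ → ℕ → ℕ
  | 0, _ => 0
  | n + 1, k => min α (kap b (n + 1) k) + mu b α n (k / b)

lemma hd_succ (b n k l : ℕ) :
    hd b (n + 1) k l = (if k % b = l % b then 0 else 1) + hd b n (k / b) (l / b) := by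
  unfold hd
  rw [Finset.card_filter, Finset.sum_range_succ', Finset.card_filter, add_comm]
  simp only [bdigit_succ]
  congr 1
  simp only [bdigit, pow_zero, Nat.div_one, ne_eq, ite_not]

lemma kap_eq_hd (b n k : ℕ) : kap b n k = hd b n k 0 := by
  unfold kap hd
  congr 1
  ext r
  simp only [Finset.mem_filter, ne_eq]
  simp [bdigit]

lemma kap_succ (b n k : ℕ) :
    kap b (n + 1) k = (if k % b = 0 then 0 else 1) + kap b n (k / b) := by
  rw [kap_eq_hd, hd_succ, kap_eq_hd, Nat.zero_div, Nat.zero_mod]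

lemma kap_zero (b k : ℕ) : kap b 0 k = 0 := by simp [kap]

lemma hd_le (b n k l : ℕ) : hd b n k l ≤ kap b n k + kap b n l := by
  unfold hd kap
  refine le_trans (Finset.card_le_card ?_) (Finset.card_union_le _ _)
  intro r hr
  simp only [Finset.mem_filter, Finset.mem_union] at hr ⊢
  by_contra hcon
  push Not at hcon
  exact hr.2 ((hcon.1 hr.1).trans (hcon.2 hr.1).symm)

lemma mu_le_muF (b α n : ℕ) : ∀ k, mu b α n k ≤ muF b n k := by
  induction n with
  | zero => intro k; simp [mu, muF]
  | succ n ih => intro k; simp only [mu, muF]; exact add_le_add (min_le_right _ _) (ih _)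

lemma mu_one_le (b n : ℕ) : ∀ k, mu b 1 n k ≤ n := by
  induction n with
  | zero => intro k; simp [mu]
  | succ n ih => intro k; have := ih (k / b); simp only [mu]; omega

lemma div_lt_pow {b n k : ℕ} (h : k < b ^ (n + 1)) : k / b < b ^ n :=
  Nat.div_lt_of_lt_mul (by rwa [← Nat.pow_succ'])

lemma lt_pow_mu {b : ℕ} (hb : 0 < b) (n : ℕ) : ∀ k, k < b ^ n → k < b ^ mu b 1 n k := by
  induction n with
  | zero => intro k hk; simpa [mu] using hk
  | succ n ih =>
    intro k hk
    by_cases h0 : kap b (n + 1) k = 0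
    · have : k = 0 := by
        refine eq_of_bdigit (n + 1) k 0 hk (by positivity) fun i hi => ?_
        by_contra hne
        have : i ∈ (Finset.range (n + 1)).filter fun r => bdigit b k r ≠ 0 := by
          simp [hi]; simpa [bdigit] using hne
        rw [kap, Finset.card_eq_zero] at h0
        simp [h0] at this
      rw [this]; positivity
    · simp only [mu]
      rw [min_eq_left (by omega), add_comm, pow_succ]
      exact Nat.lt_mul_of_div_lt (ih _ (div_lt_pow hk)) hb

/-- Concavity of `α ↦ μ_α(k)`, applied at the points `1 ≤ x + 1 ≤ x + d + 1`. -/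
lemma mu_convex (b x d n : ℕ) : ∀ k,
    x * mu b (x + d + 1) n k + d * mu b 1 n k ≤ (x + d) * mu b (x + 1) n k := by
  induction n with
  | zero => intro k; simp [mu]
  | succ n ih =>
    intro k
    have h1 := ih (k / b)
    simp only [mu]
    generalize kap b (n + 1) k = κ
    have h2 : x * min (x + d + 1) κ + d * min 1 κ ≤ (x + d) * min (x + 1) κ := by
      rcases Nat.eq_zero_or_pos κ with h | h
      · simp [h]
      rw [min_eq_left (show 1 ≤ κ from h)]
      rcases le_total κ (x + 1) with h' | h'
      · rw [min_eq_right h', min_eq_right (by omega)]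
        nlinarith [Nat.mul_le_mul_left d h]
      · rw [min_eq_left h']
        have := Nat.mul_le_mul_left x (min_le_left (x + d + 1) κ)
        nlinarith
    nlinarith

lemma mu_eq_sum (b α n : ℕ) : ∀ k, mu b α n k = ∑ a ∈ Finset.range n,
    min α ((Finset.range n).filter fun r => a ≤ r ∧ bdigit b k r ≠ 0).card := by
  induction n with
  | zero => intro k; simp [mu]
  | succ n ih =>
    intro k
    rw [Finset.sum_range_succ', mu, ih, add_comm]
    congr 1
    · refine Finset.sum_congr rfl fun a _ => ?_
      congr 1
      rw [Finset.card_filter, Finset.card_filter, Finset.sum_range_succ']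
      simp [bdigit_succ]
    · simp [kap]

/-- Up to `β²`, the Dick metric `μ_β` dominates `β` times the sum over the residue classes modulo
`β` (the components before interlacing) of the position of the leading digit. The cardinality on the
left is this sum. -/
lemma mu_lower (b β n k : ℕ) (hβ : 0 < β) :
    β * ((Finset.range n).filter fun r => ∃ r' ∈ Finset.range n, r ≤ r' ∧ r' % β = r % β ∧
      bdigit b k r' ≠ 0).card ≤ mu b β n k + β * β := by
  classical
  set T := (Finset.range n).filter fun r => ∃ r' ∈ Finset.range n, r ≤ r' ∧ r' % β = r % β ∧
      bdigit b k r' ≠ 0 with hT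
  have h1 : ∀ a, (T.filter fun r => a ≤ r ∧ r < a + β).card ≤
      min β ((Finset.range n).filter fun r => a ≤ r ∧ bdigit b k r ≠ 0).card := by
    intro a
    refine le_min ?_ ?_
    · refine (Finset.card_le_card (t := Finset.Ico a (a + β)) ?_).trans (by simp)
      intro r hr
      simpa using (Finset.mem_filter.1 hr).2
    · have : ∀ r ∈ T.filter fun r => a ≤ r ∧ r < a + β, ∃ r' ∈ (Finset.range n).filter
          fun r => a ≤ r ∧ bdigit b k r ≠ 0, r' % β = r % β := by
        intro r hr
        obtain ⟨hr1, hr2⟩ := Finset.mem_filter.1 hr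
        obtain ⟨_, r', h1, h2, h3, h4⟩ := Finset.mem_filter.1 hr1
        exact ⟨r', Finset.mem_filter.2 ⟨h1, by omega, h4⟩, h3⟩
      choose! f hf hf' using this
      refine Finset.card_le_card_of_injOn f hf ?_
      intro x hx y hy hxy
      have hm : x % β = y % β := by rw [← hf' x hx, ← hf' y hy, hxy]
      have hx2 := (Finset.mem_filter.1 hx).2
      have hy2 := (Finset.mem_filter.1 hy).2
      rcases le_total x y with h | h
      · have := (Nat.modEq_iff_dvd' h).1 hm
        have := Nat.eq_zero_of_dvd_of_lt this (by omega)
        omega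
      · have := (Nat.modEq_iff_dvd' h).1 hm.symm
        have := Nat.eq_zero_of_dvd_of_lt this (by omega)
        omega
  rw [mu_eq_sum]
  refine le_trans ?_ (add_le_add_left (Finset.sum_le_sum fun a _ => h1 a) _)
  -- every `r ≥ β` in `T` lies in exactly `β` of the windows `[a, a + β)`
  simp_rw [Finset.card_filter _ T]
  rw [Finset.sum_comm]
  have h2 : ∀ r ∈ T, β ≤ (∑ a ∈ Finset.range n, if a ≤ r ∧ r < a + β then 1 else 0) +
      if r < β then β else 0 := by
    intro r hr
    split_ifs with h
    · omega
    · rw [add_zero, ← Finset.card_filter]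
      have hrn : r < n := Finset.mem_range.1 (Finset.mem_filter.1 hr).1
      calc β = (Finset.Ioc (r - β) r).card := by simp; omega
        _ ≤ _ := Finset.card_le_card (by intro a; simp; omega)
  have h3 := Finset.sum_le_sum h2
  rw [Finset.sum_const, smul_eq_mul, Finset.sum_add_distrib, mul_comm] at h3
  refine h3.trans (add_le_add_right ?_ _)
  rw [← Finset.sum_filter, Finset.sum_const, smul_eq_mul]
  refine Nat.mul_le_mul_right _ ?_
  refine (Finset.card_le_card (t := Finset.range β) ?_).trans (by simp)
  intro r hr
  simpa using (Finset.mem_filter.1 hr).2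

/-! ### Minimum metrics of the dual net and point counts -/

lemma zero_mem_dual {b s n m : ℕ} (hb : 0 < b) (C : Fin s → Matrix (Fin n) (Fin m) (ZMod b)) :
    (0 : Fin s → ℕ) ∈ dualNet b C := by
  refine ⟨fun j => by simpa using Nat.pow_pos hb, ?_⟩
  refine Finset.sum_eq_zero fun j _ => ?_
  have : trv b n ((0 : Fin s → ℕ) j) = 0 := by
    funext i; simp [trv, bdigit]
  rw [this, Matrix.mulVec_zero]

lemma card_fiber {s n : ℕ} (p : Fin s → ℕ → Prop) [∀ j, DecidablePred (p j)] :
    ((Finset.univ ×ˢ Finset.range n).filter fun i : Fin s × ℕ => p i.1 i.2).card =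
      ∑ j, ((Finset.range n).filter (p j)).card := by
  rw [Finset.card_filter, Finset.sum_product]
  exact Finset.sum_congr rfl fun j _ => (Finset.card_filter _ _).symm

/-- The minimum Dick metric of order `β` of the net is at least `β g w - s β²`. -/
lemma mu_beta_lower {b s β g w : ℕ} (hb : b.Prime) (hβ : 0 < β) {βe : ℕ → ℕ → ZMod b}
    (hdist : ∀ j l j' l', j < β * s → l < g → j' < β * s → l' < g →
      βe j l = βe j' l' → j = j' ∧ l = l') (k : Fin s → ℕ)
    (hk : k ∈ dualNet b (interlace β s (g * w) fun j => csMatrix b w (g * w) (βe j.1)))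
    (hk0 : k ≠ 0) :
    β * (g * w) ≤ ∑ j, mu b β (β * (g * w)) (k j) + s * (β * β) := by
  classical
  set n := β * (g * w) with hn
  set S : Finset (Fin s × ℕ) := (Finset.univ ×ˢ Finset.range n).filter
    fun i => ∃ r' ∈ Finset.range n, i.2 ≤ r' ∧ r' % β = i.2 % β ∧ bdigit b (k i.1) r' ≠ 0 with hS
  have hcard : g * w < S.card := by
    by_contra! hcon
    refine hk0 (dual_eq_of_down hb hβ hdist k 0 hk (zero_mem_dual hb.pos _) S ?_ hcon ?_ ?_)
    · intro i hi; simpa using (Finset.mem_product.1 (Finset.mem_filter.1 hi).1).2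
    · intro j r h
      obtain ⟨h1, r', h2, h3, h4, h5⟩ := Finset.mem_filter.1 h
      simp only [Nat.add_mod_right] at h3 h4
      refine Finset.mem_filter.2 ⟨?_, r', h2, by simp only; omega, h4, h5⟩
      simp only [Finset.mem_product, Finset.mem_univ, Finset.mem_range, true_and] at h1 ⊢
      omega
    · intro j r hr hne
      refine Finset.mem_filter.2 ⟨by simpa using hr, r, by simpa using hr, le_rfl, rfl, ?_⟩
      simpa [bdigit] using hne
  have hc2 : S.card = _ := card_fiber (s := s) (n := n) (fun j r =>
    ∃ r' ∈ Finset.range n, r ≤ r' ∧ r' % β = r % β ∧ bdigit b (k j) r' ≠ 0)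
  have h3 : β * S.card ≤ ∑ j, (mu b β n (k j) + β * β) := by
    rw [hc2, Finset.mul_sum]
    exact Finset.sum_le_sum fun j _ => mu_lower b β n (k j) hβ
  rw [Finset.sum_add_distrib] at h3
  simp only [Finset.sum_const, Finset.card_univ, Fintype.card_fin, smul_eq_mul] at h3
  exact (Nat.mul_le_mul_left β hcard.le).trans h3

/-- Elements of the dual net are determined by their digits beyond the first `a j`, if
`∑ a j ≤ g w`. -/
lemma dual_eq_of_div_eq {b s β g w : ℕ} (hb : b.Prime) (hβ : 0 < β) {βe : ℕ → ℕ → ZMod b}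
    (hdist : ∀ j l j' l', j < β * s → l < g → j' < β * s → l' < g →
      βe j l = βe j' l' → j = j' ∧ l = l') (k l : Fin s → ℕ)
    (hk : k ∈ dualNet b (interlace β s (g * w) fun j => csMatrix b w (g * w) (βe j.1)))
    (hl : l ∈ dualNet b (interlace β s (g * w) fun j => csMatrix b w (g * w) (βe j.1)))
    (a : Fin s → ℕ) (ha : ∑ j, a j ≤ g * w) (h : ∀ j, k j / b ^ a j = l j / b ^ a j) : k = l := by
  set n := β * (g * w) with hn
  refine dual_eq_of_down hb hβ hdist k l hk hl
    ((Finset.univ ×ˢ Finset.range n).filter fun i => i.2 < a i.1) ?_ ?_ ?_ ?_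
  · intro i hi; simpa using (Finset.mem_product.1 (Finset.mem_filter.1 hi).1).2
  · rw [card_fiber (fun j r => r < a j)]
    refine le_trans (Finset.sum_le_sum fun j _ => ?_) ha
    refine (Finset.card_le_card (t := Finset.range (a j)) ?_).trans (by simp)
    intro r hr
    simpa using (Finset.mem_filter.1 hr).2
  · intro j r h
    simp at h ⊢
    omega
  · intro j r hr hne
    simp only [Finset.mem_filter, Finset.mem_product, Finset.mem_univ, Finset.mem_range, true_and]
    refine ⟨hr, ?_⟩
    by_contra! hle
    apply hne
    unfold bdigit
    obtain ⟨d, rfl⟩ := Nat.exists_eq_add_of_le hle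
    rw [pow_add, ← Nat.div_div_eq_div_mul, ← Nat.div_div_eq_div_mul, h]

/-- The minimum NRT metric of the net is at least `g w`. -/
lemma mu_one_lower {b s β g w : ℕ} (hb : b.Prime) (hβ : 0 < β) {βe : ℕ → ℕ → ZMod b}
    (hdist : ∀ j l j' l', j < β * s → l < g → j' < β * s → l' < g →
      βe j l = βe j' l' → j = j' ∧ l = l') (k : Fin s → ℕ)
    (hk : k ∈ dualNet b (interlace β s (g * w) fun j => csMatrix b w (g * w) (βe j.1)))
    (hk0 : k ≠ 0) :
    g * w ≤ ∑ j, mu b 1 (β * (g * w)) (k j) := by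
  by_contra! hcon
  refine hk0 (dual_eq_of_div_eq hb hβ hdist k 0 hk (zero_mem_dual hb.pos _)
    (fun j => mu b 1 (β * (g * w)) (k j)) hcon.le fun j => ?_)
  rw [Nat.div_eq_of_lt (lt_pow_mu hb.pos _ _ (hk.1 j))]
  simp

lemma exists_le_sum_eq {s : ℕ} (a : Fin s → ℕ) (M : ℕ) (hM : M ≤ ∑ j, a j) :
    ∃ a' : Fin s → ℕ, (∀ j, a' j ≤ a j) ∧ ∑ j, a' j = M := by
  induction M with
  | zero => exact ⟨0, fun _ => Nat.zero_le _, by simp⟩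
  | succ M ih =>
    obtain ⟨a', h1, h2⟩ := ih (by omega)
    obtain ⟨j, -, hj⟩ : ∃ j ∈ Finset.univ, a' j < a j :=
      Finset.exists_lt_of_sum_lt (by omega)
    refine ⟨fun i => a' i + if i = j then 1 else 0, fun i => ?_, ?_⟩
    · simp only
      split_ifs with h
      · subst h; omega
      · simpa using h1 i
    · rw [Finset.sum_add_distrib, h2]; simp

/-- The number of elements of the dual net in a box with side lengths `b ^ a j`. -/
lemma dual_count {b s β g w : ℕ} (hb : b.Prime) (hβ : 0 < β) {βe : ℕ → ℕ → ZMod b}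
    (hdist : ∀ j l j' l', j < β * s → l < g → j' < β * s → l' < g →
      βe j l = βe j' l' → j = j' ∧ l = l') (F : Finset (Fin s → ℕ)) (a : Fin s → ℕ)
    (hF : ∀ k ∈ F, k ∈ dualNet b (interlace β s (g * w) fun j => csMatrix b w (g * w) (βe j.1)))
    (hFa : ∀ k ∈ F, ∀ j, k j < b ^ a j) (ha : g * w ≤ ∑ j, a j) :
    F.card ≤ b ^ (∑ j, a j - g * w) := by
  obtain ⟨a', h1, h2⟩ := exists_le_sum_eq a _ ha
  have h3 : F.card ≤ (Fintype.piFinset fun j => Finset.range (b ^ (a j - a' j))).card := by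
    refine Finset.card_le_card_of_injOn (fun k j => k j / b ^ a' j) ?_ ?_
    · intro k hk
      refine Finset.mem_coe.2 (Fintype.mem_piFinset.2 fun j => Finset.mem_range.2 ?_)
      refine Nat.div_lt_of_lt_mul ?_
      rw [← pow_add, Nat.add_sub_cancel' (h1 j)]
      exact hFa k hk j
    · intro k hk l hl hkl
      exact dual_eq_of_div_eq hb hβ hdist k l (hF k hk) (hF l hl) a' h2.le fun j => congrFun hkl j
  refine h3.trans (le_of_eq ?_)
  rw [Fintype.card_piFinset]
  simp only [Finset.card_range]
  rw [Finset.prod_pow_eq_pow_sum, Finset.sum_tsub_distrib _ (fun j _ => h1 j), h2]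

/-! ### Summation over the dual net -/

lemma card_compositions {s : ℕ} (hs : 0 < s) (N : ℕ) (I : Finset (Fin s → ℕ))
    (hI : ∀ a ∈ I, ∑ j, a j = N) : I.card ≤ (N + 1) ^ (s - 1) := by
  obtain ⟨s, rfl⟩ : ∃ s', s = s' + 1 := ⟨s - 1, by omega⟩
  have h : I.card ≤ (Fintype.piFinset fun _ : Fin s => Finset.range (N + 1)).card := by
    refine Finset.card_le_card_of_injOn (fun a j => a j.succ) ?_ ?_
    · intro a ha
      refine Finset.mem_coe.2 (Fintype.mem_piFinset.2 fun j => Finset.mem_range.2 ?_)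
      have := Finset.single_le_sum (f := a) (fun i _ => Nat.zero_le _) (Finset.mem_univ j.succ)
      rw [hI a ha] at this
      exact Nat.lt_succ_of_le this
    · intro a ha a' ha' h
      have h1 := hI a ha
      have h2 := hI a' ha'
      rw [Fin.sum_univ_succ] at h1 h2
      have h3 : ∀ j : Fin s, a j.succ = a' j.succ := fun j => congrFun h j
      simp only [h3] at h1
      funext j
      refine Fin.cases ?_ h3 j
      omega
  simpa [Fintype.card_piFinset] using h

lemma summable_poly_geom (t : ℕ) (ρ : ℝ) (hρ0 : 0 ≤ ρ) (hρ1 : ρ < 1) :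
    Summable fun z : ℕ => ((z : ℝ) + 1) ^ t * ρ ^ z := by
  rcases hρ0.eq_or_lt with h0 | h0
  · refine summable_of_ne_finset_zero (s := {0}) fun z hz => ?_
    rw [← h0, zero_pow (by simpa using hz), mul_zero]
  · have h1 : Summable fun z : ℕ => ((z : ℝ) ^ (t) * ρ ^ z) :=
      summable_pow_mul_geometric_of_norm_lt_one _ (by
        rw [Real.norm_of_nonneg hρ0]; exact hρ1)
    have h2 := ((summable_nat_add_iff 1).2 h1).mul_left ρ⁻¹
    refine h2.congr fun z => ?_
    push_cast
    rw [pow_succ]; field_simp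

/-- Sum over vectors of given excess `∑ a j - m`; the factor `(m + 1) ^ (s - 1)` is the source of
the logarithm in the final bound. -/
lemma composition_sum {s : ℕ} (hs : 0 < s) (m : ℕ) (ρ : ℝ) (hρ0 : 0 ≤ ρ) (hρ1 : ρ < 1)
    (I : Finset (Fin s → ℕ)) (hI : ∀ a ∈ I, m ≤ ∑ j, a j) :
    ∑ a ∈ I, ρ ^ (∑ j, a j - m) ≤
      ((m : ℝ) + 1) ^ (s - 1) * ∑' z : ℕ, ((z : ℝ) + 1) ^ (s - 1) * ρ ^ z := by
  classical
  have hsum := summable_poly_geom (s - 1) ρ hρ0 hρ1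
  have hcomp : ∑ a ∈ I, ρ ^ (∑ j, a j - m) = ∑ z ∈ I.image fun a => ∑ j, a j - m,
      (I.filter (fun a => ∑ j, a j - m = z)).card • ρ ^ z :=
    Finset.sum_comp (fun z => ρ ^ z) (fun a : Fin s → ℕ => ∑ j, a j - m)
  have hle : ∀ z : ℕ, (I.filter (fun a => ∑ j, a j - m = z)).card • ρ ^ z ≤
      ((m : ℝ) + 1) ^ (s - 1) * (((z : ℝ) + 1) ^ (s - 1) * ρ ^ z) := by
    intro z
    rw [nsmul_eq_mul, ← mul_assoc, ← mul_pow]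
    refine mul_le_mul_of_nonneg_right ?_ (pow_nonneg hρ0 z)
    have h2 := card_compositions hs (m + z) (I.filter (fun a => ∑ j, a j - m = z)) (by
      intro a ha
      obtain ⟨h3, h4⟩ := Finset.mem_filter.1 ha
      have := hI a h3
      omega)
    have h3 : ((I.filter (fun a => ∑ j, a j - m = z)).card : ℝ) ≤ ((m : ℝ) + z + 1) ^ (s - 1) := by
      exact_mod_cast h2
    refine h3.trans (pow_le_pow_left₀ (by positivity) ?_ _)
    have hm0 : (0 : ℝ) ≤ m := Nat.cast_nonneg m
    have hz0 : (0 : ℝ) ≤ z := Nat.cast_nonneg z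
    nlinarith [mul_nonneg hm0 hz0]
  rw [hcomp]
  refine (Finset.sum_le_sum fun z _ => hle z).trans ?_
  rw [← Finset.mul_sum]
  refine mul_le_mul_of_nonneg_left ?_ (by positivity)
  exact hsum.sum_le_tsum _ fun z _ => by positivity

/-- Interpolating `μ_α` between `μ_1` and `μ_β`. Here `M`, `U`, `B` stand for `μ_α(k)`, `μ_1(k)`,
`μ_β(k)`; since `β ≥ 2α`, the excess `z = μ_1(k) - m` enters `2 μ_α(k)` with a factor greater
than `1`, which beats the number `b ^ z` of dual elements with that excess. -/
lemma exponent_ineq {α β s m z M U B : ℕ} (hα : 1 ≤ α) (hβ : 2 * α ≤ β)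
    (h1 : (α - 1) * B + (β - α) * U ≤ (β - 1) * M) (h2 : β * m ≤ B + s * (β * β))
    (h3 : U = m + z) :
    (2 * α * m : ℝ) + z + z / (β - 1) ≤ 2 * M + 2 * (s * (β * β)) := by
  have hα' : (1 : ℝ) ≤ α := by exact_mod_cast hα
  have hβ' : 2 * (α : ℝ) ≤ β := by exact_mod_cast hβ
  have h1' : ((α : ℝ) - 1) * B + (β - α) * (m + z) ≤ (β - 1) * M := by
    have := h1
    rw [h3] at this
    have h4 : (((α - 1) * B + (β - α) * (m + z) : ℕ) : ℝ) ≤ (((β - 1) * M : ℕ) : ℝ) := by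
      exact_mod_cast this
    push_cast [Nat.cast_sub hα, Nat.cast_sub (show α ≤ β by omega),
      Nat.cast_sub (show 1 ≤ β by omega)] at h4
    exact h4
  have h2' : (β : ℝ) * m ≤ B + s * (β * β) := by exact_mod_cast h2
  have hpos : (0 : ℝ) < β - 1 := by linarith
  have hz : (0 : ℝ) ≤ z := by positivity
  have hs : (0 : ℝ) ≤ s * (β * β) := by positivity
  have key : (2 * α * m : ℝ) * (β - 1) + z * (β - 1) + z ≤
      (2 * M + 2 * (s * (β * β))) * (β - 1) := by
    nlinarith [mul_le_mul_of_nonneg_left h2' (by linarith : (0 : ℝ) ≤ α - 1),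
      mul_nonneg hz (by linarith : (0 : ℝ) ≤ β - 2 * α),
      mul_nonneg hs (by linarith : (0 : ℝ) ≤ β - α)]
  have h5 : (2 * α * m : ℝ) + z + z / (β - 1) =
      ((2 * α * m : ℝ) * (β - 1) + z * (β - 1) + z) / (β - 1) := by
    field_simp
  rw [h5, div_le_iff₀ hpos]
  exact key

/-- The sum of `b ^ (-2 μ_α(k))` over the nonzero elements of the dual net. -/
lemma dual_sum_bound {b s α β g : ℕ} (hb : b.Prime) (hs : 0 < s) (hα : 2 ≤ α) (hβ : 2 * α ≤ β)
    (hg : 0 < g) {βe : ℕ → ℕ → ZMod b}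
    (hdist : ∀ j l j' l', j < β * s → l < g → j' < β * s → l' < g →
      βe j l = βe j' l' → j = j' ∧ l = l') :
    ∃ A : ℝ, 0 < A ∧ ∀ w : ℕ, 0 < w → ∀ F : Finset (Fin s → ℕ),
      (∀ k ∈ F, k ∈ dualNet b (interlace β s (g * w) fun j => csMatrix b w (g * w) (βe j.1)) ∧
        k ≠ 0) →
      ∑ k ∈ F, (((b : ℝ) ^ (2 * ∑ j, mu b α (β * (g * w)) (k j)))⁻¹) ≤
        A * Real.log ((b : ℝ) ^ (g * w)) ^ (s - 1) / ((b : ℝ) ^ (g * w)) ^ (2 * α) := by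
  classical
  have hb1 : (1 : ℝ) < b := by exact_mod_cast hb.one_lt
  have hb0 : (0 : ℝ) < b := by linarith
  have hβ1 : (0 : ℝ) < β - 1 := by
    have : (4 : ℝ) ≤ β := by exact_mod_cast (by omega : 4 ≤ β)
    linarith
  set ρ : ℝ := (b : ℝ) ^ (-(1 / ((β : ℝ) - 1))) with hρ
  have hρ0 : 0 < ρ := Real.rpow_pos_of_pos hb0 _
  have hρ1 : ρ < 1 := Real.rpow_lt_one_of_one_lt_of_neg hb1 (by
    rw [neg_lt_zero]; positivity)
  set c : ℝ := (b : ℝ) ^ (2 * ((s : ℝ) * (β * β))) with hc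
  have hc0 : 0 < c := Real.rpow_pos_of_pos hb0 _
  set Tot : ℝ := ∑' z : ℕ, ((z : ℝ) + 1) ^ (s - 1) * ρ ^ z with hTot
  have hTot0 : 0 ≤ Tot := tsum_nonneg fun z => by positivity
  have hlog : 0 < Real.log b := Real.log_pos hb1
  refine ⟨c * ((2 / Real.log b) ^ (s - 1) * (Tot + 1)), by positivity, fun w hw F hF => ?_⟩
  set m := g * w with hm
  have hm0 : 0 < m := Nat.mul_pos hg hw
  set n := β * m with hn
  set aa : (Fin s → ℕ) → (Fin s → ℕ) := fun k j => mu b 1 n (k j) with haa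
  have hU : ∀ k ∈ F, m ≤ ∑ j, aa k j := fun k hk =>
    mu_one_lower hb (by omega) hdist k (hF k hk).1 (hF k hk).2
  have hterm : ∀ k ∈ F, (((b : ℝ) ^ (2 * ∑ j, mu b α n (k j)))⁻¹) ≤
      c * ((b : ℝ) ^ (2 * α * m))⁻¹ * (((b : ℝ) ^ (∑ j, aa k j - m))⁻¹ *
        ρ ^ (∑ j, aa k j - m)) := by
    intro k hk
    have h1 : (α - 1) * ∑ j, mu b β n (k j) + (β - α) * ∑ j, aa k j ≤
        (β - 1) * ∑ j, mu b α n (k j) := by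
      simp only [Finset.mul_sum]
      rw [← Finset.sum_add_distrib]
      refine Finset.sum_le_sum fun j _ => ?_
      have := mu_convex b (α - 1) (β - α) n (k j)
      rw [show α - 1 + (β - α) + 1 = β by omega, show α - 1 + (β - α) = β - 1 by omega,
        show α - 1 + 1 = α by omega] at this
      exact this
    have h2 := mu_beta_lower hb (by omega) hdist k (hF k hk).1 (hF k hk).2
    have h3 : ∑ j, aa k j = m + (∑ j, aa k j - m) := (Nat.add_sub_cancel' (hU k hk)).symm
    have h4 := exponent_ineq (by omega) hβ h1 h2 h3
    generalize ∑ j, aa k j - m = z at h4 ⊢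
    generalize ∑ j, mu b α n (k j) = M at h4 ⊢
    rw [hc, hρ]
    simp only [← Real.rpow_natCast, ← Real.rpow_neg hb0.le, ← Real.rpow_mul hb0.le,
      ← Real.rpow_add hb0]
    refine Real.rpow_le_rpow_of_exponent_le hb1.le ?_
    push_cast
    have h6 : -(1 / ((β : ℝ) - 1)) * z = -(z / (β - 1)) := by ring
    rw [h6]
    linarith
  have hK : 0 ≤ c * ((b : ℝ) ^ (2 * α * m))⁻¹ := by positivity
  have hmain : ∑ k ∈ F, (((b : ℝ) ^ (2 * ∑ j, mu b α n (k j)))⁻¹) ≤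
      c * ((b : ℝ) ^ (2 * α * m))⁻¹ * (((m : ℝ) + 1) ^ (s - 1) * Tot) := by
    refine (Finset.sum_le_sum hterm).trans ?_
    rw [← Finset.mul_sum]
    refine mul_le_mul_of_nonneg_left ?_ hK
    rw [← Finset.sum_fiberwise_of_maps_to (g := aa) (t := F.image aa)
      (fun k hk => Finset.mem_image_of_mem _ hk)]
    refine le_trans (Finset.sum_le_sum fun a ha => ?_)
      (composition_sum hs m ρ hρ0.le hρ1 (F.image aa) (by
        intro a ha
        obtain ⟨k, hk, rfl⟩ := Finset.mem_image.1 ha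
        exact hU k hk))
    have ham : m ≤ ∑ j, a j := by
      obtain ⟨k, hk, rfl⟩ := Finset.mem_image.1 ha
      exact hU k hk
    have h1 : ∑ k ∈ F.filter (fun k => aa k = a), (((b : ℝ) ^ (∑ j, aa k j - m))⁻¹ *
        ρ ^ (∑ j, aa k j - m)) = ((F.filter (fun k => aa k = a)).card : ℝ) *
        (((b : ℝ) ^ (∑ j, a j - m))⁻¹ * ρ ^ (∑ j, a j - m)) := by
      rw [← nsmul_eq_mul, ← Finset.sum_const]
      refine Finset.sum_congr rfl fun k hk => ?_
      rw [(Finset.mem_filter.1 hk).2]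
    rw [h1, ← mul_assoc]
    have h2 := dual_count hb (by omega) hdist (F.filter (fun k => aa k = a)) a
      (fun k hk => (hF k (Finset.mem_filter.1 hk).1).1) (by
        intro k hk j
        obtain ⟨h3, h4⟩ := Finset.mem_filter.1 hk
        rw [← h4]
        exact lt_pow_mu hb.pos _ _ ((hF k h3).1.1 j)) ham
    have h3 : ((F.filter (fun k => aa k = a)).card : ℝ) ≤ (b : ℝ) ^ (∑ j, a j - m) := by
      exact_mod_cast h2
    refine mul_le_of_le_one_left (by positivity) ?_
    rw [← div_eq_mul_inv, div_le_one (by positivity)]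
    exact h3
  refine hmain.trans ?_
  rw [Real.log_pow, ← pow_mul, mul_comm m (2 * α), div_eq_mul_inv]
  have h5 : ((m : ℝ) + 1) ^ (s - 1) ≤ (2 / Real.log b) ^ (s - 1) * (m * Real.log b) ^ (s - 1) := by
    rw [← mul_pow]
    have : (2 / Real.log b) * (m * Real.log b) = 2 * m := by field_simp
    rw [this]
    have : (1 : ℝ) ≤ m := by exact_mod_cast hm0
    gcongr
    linarith
  calc c * ((b : ℝ) ^ (2 * α * m))⁻¹ * (((m : ℝ) + 1) ^ (s - 1) * Tot)
      ≤ c * ((b : ℝ) ^ (2 * α * m))⁻¹ *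
        (((2 / Real.log b) ^ (s - 1) * (m * Real.log b) ^ (s - 1)) * (Tot + 1)) := by
        gcongr
        linarith
    _ = _ := by ring

/-! ### Walsh coefficients and their digit recursion -/

open ComplexConjugate in
/-- The Walsh coefficient of a function on `[0,1)`. -/
noncomputable def walC (b : ℕ) (f : ℝ → ℝ) (k : ℕ) : ℂ :=
  ∫ x in Set.Ico (0 : ℝ) 1, (f x : ℂ) * conj (walsh b k x)

open ComplexConjugate in
/-- The Walsh coefficient of a function on `[0,1)²`. -/
noncomputable def walD (b : ℕ) (h : ℝ → ℝ → ℝ) (k l : ℕ) : ℂ :=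
  ∫ x in Set.Ico (0 : ℝ) 1, ∫ y in Set.Ico (0 : ℝ) 1,
    (h x y : ℂ) * conj (walsh b k x) * walsh b l y

/-- The primitive root of unity `exp(2πi/b)`. -/
noncomputable def eta (b : ℕ) : ℂ := Complex.exp (2 * (Real.pi : ℂ) * Complex.I / (b : ℂ))

lemma walsh_norm (b k : ℕ) (x : ℝ) : ‖walsh b k x‖ = 1 := by
  unfold walsh
  have : 2 * (Real.pi : ℂ) * Complex.I / (b : ℂ) *
      ∑ a ∈ Finset.range (k + 1), (bdigit b k a : ℂ) * (rdigit b x (a + 1) : ℂ) =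
      ((2 * Real.pi / b * ∑ a ∈ Finset.range (k + 1),
        (bdigit b k a : ℝ) * (rdigit b x (a + 1) : ℝ) : ℝ) : ℂ) * Complex.I := by
    push_cast; ring
  rw [this, Complex.norm_exp_ofReal_mul_I]

lemma eta_norm (b : ℕ) : ‖eta b‖ = 1 := by
  unfold eta
  have : 2 * (Real.pi : ℂ) * Complex.I / (b : ℂ) = ((2 * Real.pi / b : ℝ) : ℂ) * Complex.I := by
    push_cast; ring
  rw [this, Complex.norm_exp_ofReal_mul_I]

lemma walsh_measurable (b k : ℕ) : Measurable (walsh b k) := by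
  unfold walsh
  refine Complex.measurable_exp.comp (Measurable.const_mul ?_ _)
  refine Finset.measurable_sum _ fun a _ => Measurable.const_mul ?_ _
  have h1 : Measurable fun x : ℝ => ⌊x * (b : ℝ) ^ (a + 1)⌋ :=
    Int.measurable_floor.comp (measurable_id.mul_const _)
  have h2 : Measurable fun z : ℤ => (((z % (b : ℤ) : ℤ)) : ℂ) := Measurable.of_discrete
  exact h2.comp h1

lemma bdigit_eq_zero {b k a : ℕ} (hb : 1 < b) (h : k < a) : bdigit b k a = 0 := by
  unfold bdigit
  rw [Nat.div_eq_of_lt (h.trans (Nat.lt_pow_self hb)), Nat.zero_mod]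

lemma walsh_eq_sum {b k L : ℕ} (hb : 1 < b) (hL : k + 1 ≤ L) (x : ℝ) :
    walsh b k x = Complex.exp (2 * (Real.pi : ℂ) * Complex.I / (b : ℂ) *
    ∑ a ∈ Finset.range L, (bdigit b k a : ℂ) * (rdigit b x (a + 1) : ℂ)) := by
  unfold walsh
  congr 2
  refine Finset.sum_subset (by simpa using hL) fun a _ ha => ?_
  rw [bdigit_eq_zero hb (by simpa using ha)]; simp

lemma rdigit_one {b i : ℕ} (hi : i < b) {x : ℝ} (hx : x ∈ Set.Ico (0 : ℝ) 1) :
    rdigit b ((i + x) / b) 1 = i := by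
  unfold rdigit
  have hb : (b : ℝ) ≠ 0 := by
    have : 0 < b := by omega
    positivity
  rw [pow_one, div_mul_cancel₀ _ hb, add_comm, Int.floor_add_natCast,
    Int.floor_eq_zero_iff.2 hx, zero_add]
  exact_mod_cast Nat.mod_eq_of_lt hi

lemma rdigit_succ {b : ℕ} (hb : 0 < b) (i a : ℕ) (x : ℝ) :
    rdigit b ((i + x) / b) (a + 2) = rdigit b x (a + 1) := by
  unfold rdigit
  have hb : (b : ℝ) ≠ 0 := by positivity
  have h1 : ((i : ℝ) + x) / b * (b : ℝ) ^ (a + 2) =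
      x * (b : ℝ) ^ (a + 1) + ((b * (i * b ^ a) : ℕ) : ℝ) := by
    push_cast
    field_simp
    ring
  rw [h1, Int.floor_add_natCast]
  push_cast
  rw [Int.add_mul_emod_self_left]

/-- Splitting off the first digit `i` of the argument and the lowest digit of `k`. -/
lemma walsh_split {b : ℕ} (hb : 1 < b) (k i : ℕ) (hi : i < b) {x : ℝ}
    (hx : x ∈ Set.Ico (0 : ℝ) 1) :
    walsh b k ((i + x) / b) = eta b ^ (k % b * i) * walsh b (k / b) x := by
  have h1 : k / b ≤ k := Nat.div_le_self _ _
  rw [walsh_eq_sum hb (show k + 1 ≤ k + 1 + 1 by omega),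
    walsh_eq_sum hb (show k / b + 1 ≤ k + 1 by omega), Finset.sum_range_succ']
  simp only [bdigit_succ, zero_add, rdigit_one hi hx]
  simp only [add_assoc, one_add_one_eq_two, rdigit_succ (show 0 < b by omega)]
  unfold eta
  rw [← Complex.exp_nat_mul, ← Complex.exp_add]
  congr 1
  simp only [bdigit, pow_zero, Nat.div_one]
  push_cast
  ring

lemma integral_split {b : ℕ} (hb : 0 < b) (f : ℝ → ℂ)
    (hf : IntegrableOn f (Set.Ico (0 : ℝ) 1)) :
    ∫ x in Set.Ico (0 : ℝ) 1, f x =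
      (1 / (b : ℂ)) * ∑ i ∈ Finset.range b, ∫ x in Set.Ico (0 : ℝ) 1, f ((i + x) / b) := by
  have hb0 : (0 : ℝ) < b := by positivity
  have hbc : (b : ℂ) ≠ 0 := by exact_mod_cast hb.ne'
  have hconv : ∀ f : ℝ → ℂ, ∫ x in Set.Ico (0 : ℝ) 1, f x = ∫ x in (0 : ℝ)..1, f x := by
    intro f
    rw [integral_Ico_eq_integral_Ioc, intervalIntegral.integral_of_le zero_le_one]
  have hf' : IntervalIntegrable f volume 0 1 := by
    rw [intervalIntegrable_iff_integrableOn_Ico_of_le zero_le_one]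
    exact hf
  have h1 := intervalIntegral.sum_integral_adjacent_intervals (f := f) (μ := volume)
    (a := fun i : ℕ => (i : ℝ) / b) (n := b) (by
      intro i hi
      refine hf'.mono_set ?_
      rw [Set.uIcc_of_le (by gcongr; simp), Set.uIcc_of_le zero_le_one]
      refine Set.Icc_subset_Icc (by positivity) ?_
      rw [div_le_one hb0]
      exact_mod_cast hi)
  simp only [Nat.cast_zero, zero_div, div_self hb0.ne'] at h1
  rw [hconv, ← h1, Finset.mul_sum]
  refine Finset.sum_congr rfl fun i _ => ?_
  rw [hconv]
  have h2 := intervalIntegral.integral_comp_add_div (a := 0) (b := 1) f hb0.ne' ((i : ℝ) / b)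
  have h3 : ∀ x : ℝ, (i : ℝ) / b + x / b = (i + x) / b := fun x => by ring
  simp only [h3, add_zero] at h2
  rw [h2]
  push_cast
  rw [Complex.real_smul]
  push_cast
  field_simp

open ComplexConjugate

lemma integrable1 (f : ℝ → ℂ) (hf : Continuous f) (g : ℝ → ℂ) (hg : Measurable g)
    (hgb : ∀ x, ‖g x‖ ≤ 1) : IntegrableOn (fun x => f x * g x) (Set.Ico (0 : ℝ) 1) := by
  have h1 : IntegrableOn f (Set.Ico (0 : ℝ) 1) :=
    (hf.integrableOn_Icc (a := 0) (b := 1)).mono_set Set.Ico_subset_Icc_self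
  exact h1.mul_bdd (c := 1) hg.aestronglyMeasurable (Filter.Eventually.of_forall hgb)

lemma integrable2 (b : ℕ) (h : ℝ → ℝ → ℝ) (hh : Continuous fun z : ℝ × ℝ => h z.1 z.2) (k l : ℕ) :
    Integrable (fun z : ℝ × ℝ => (h z.1 z.2 : ℂ) * conj (walsh b k z.1) * walsh b l z.2)
      ((volume.restrict (Set.Ico (0 : ℝ) 1)).prod (volume.restrict (Set.Ico (0 : ℝ) 1))) := by
  rw [Measure.prod_restrict]
  have h1 : IntegrableOn (fun z : ℝ × ℝ => (h z.1 z.2 : ℂ))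
      (Set.Icc (0 : ℝ) 1 ×ˢ Set.Icc (0 : ℝ) 1) (volume.prod volume) :=
    (Complex.continuous_ofReal.comp hh).continuousOn.integrableOn_compact
      (isCompact_Icc.prod isCompact_Icc)
  have h2 := h1.mono_set (Set.prod_mono
    (Set.Ico_subset_Icc_self : Set.Ico (0 : ℝ) 1 ⊆ Set.Icc 0 1)
    (Set.Ico_subset_Icc_self : Set.Ico (0 : ℝ) 1 ⊆ Set.Icc 0 1))
  refine Integrable.mul_bdd (c := 1) (Integrable.mul_bdd (c := 1) h2 ?_ ?_) ?_ ?_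
  · exact (Complex.continuous_conj.measurable.comp
      ((walsh_measurable b k).comp measurable_fst)).aestronglyMeasurable
  · exact Filter.Eventually.of_forall fun z => by simp [walsh_norm]
  · exact ((walsh_measurable b l).comp measurable_snd).aestronglyMeasurable
  · exact Filter.Eventually.of_forall fun z => by simp [walsh_norm]

/-- Self-similarity of Walsh coefficients: the intervals of length `1/b` are rescaled to `[0,1)`. -/
lemma walC_split {b : ℕ} (hb : 1 < b) (f : ℝ → ℝ) (hf : Continuous f) (k : ℕ) :
    walC b f k = (1 / (b : ℂ)) * ∑ i ∈ Finset.range b,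
      conj (eta b ^ (k % b * i)) * walC b (fun x => f ((i + x) / b)) (k / b) := by
  unfold walC
  rw [integral_split (show 0 < b by omega)]
  · congr 1
    refine Finset.sum_congr rfl fun i hi => ?_
    rw [← integral_const_mul]
    refine setIntegral_congr_fun measurableSet_Ico fun x hx => ?_
    simp only
    rw [walsh_split hb k i (Finset.mem_range.1 hi) hx, map_mul]
    ring
  · exact integrable1 _ (Complex.continuous_ofReal.comp hf) _
      (Complex.continuous_conj.measurable.comp (walsh_measurable b k))
      (fun x => by simp [walsh_norm])

lemma walD_split {b : ℕ} (hb : 1 < b) (h : ℝ → ℝ → ℝ)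
    (hh : Continuous fun z : ℝ × ℝ => h z.1 z.2) (k l : ℕ) :
    walD b h k l = (1 / (b : ℂ) ^ 2) * ∑ i ∈ Finset.range b, ∑ j ∈ Finset.range b,
      conj (eta b ^ (k % b * i)) * eta b ^ (l % b * j) *
        walD b (fun x y => h ((i + x) / b) ((j + y) / b)) (k / b) (l / b) := by
  unfold walD
  rw [integral_split (show 0 < b by omega) _ (integrable2 b h hh k l).integral_prod_left]
  rw [pow_two, ← one_div_mul_one_div, mul_assoc]
  congr 1
  rw [Finset.mul_sum]
  refine Finset.sum_congr rfl fun i hi => ?_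
  rw [Finset.mul_sum]
  have hin : ∀ x ∈ Set.Ico (0 : ℝ) 1, ∫ y in Set.Ico (0 : ℝ) 1,
      (h ((i + x) / b) y : ℂ) * conj (walsh b k ((i + x) / b)) * walsh b l y =
      ∑ j ∈ Finset.range b, 1 / (b : ℂ) * (conj (eta b ^ (k % b * i)) * eta b ^ (l % b * j)) *
        ∫ y in Set.Ico (0 : ℝ) 1, (h ((i + x) / b) ((j + y) / b) : ℂ) *
          conj (walsh b (k / b) x) * walsh b (l / b) y := by
    intro x hx
    rw [integral_split (show 0 < b by omega), Finset.mul_sum]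
    · refine Finset.sum_congr rfl fun j hj => ?_
      rw [mul_assoc]
      congr 1
      rw [← integral_const_mul]
      refine setIntegral_congr_fun measurableSet_Ico fun y hy => ?_
      rw [walsh_split hb k i (Finset.mem_range.1 hi) hx,
        walsh_split hb l j (Finset.mem_range.1 hj) hy, map_mul]
      ring
    · refine integrable1 _ ?_ _ (walsh_measurable b l) (fun x => by simp [walsh_norm])
      have : Continuous fun y : ℝ => h ((i + x) / b) y :=
        hh.comp (Continuous.prodMk continuous_const continuous_id)
      exact (Complex.continuous_ofReal.comp this).mul continuous_const
  rw [setIntegral_congr_fun measurableSet_Ico hin, integral_finsetSum]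
  · refine Finset.sum_congr rfl fun j _ => ?_
    rw [integral_const_mul]
    ring
  · intro j _
    refine Integrable.const_mul ?_ _
    have : Continuous fun z : ℝ × ℝ => h ((i + z.1) / b) ((j + z.2) / b) :=
      hh.comp (f := fun z : ℝ × ℝ => (((i : ℝ) + z.1) / b, ((j : ℝ) + z.2) / b)) (by fun_prop)
    exact (integrable2 b (fun x y => h ((i + x) / b) ((j + y) / b)) this
      (k / b) (l / b)).integral_prod_left

/-! ### Walsh coefficients of monomials -/

/-- Orthogonality of the characters of `ℤ/b`. -/
lemma charsum {b k l : ℕ} (hb : 1 < b) (hk : k < b) (hl : l < b) :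
    ∑ i ∈ Finset.range b, conj (eta b ^ (k * i)) * eta b ^ (l * i) =
      if k = l then (b : ℂ) else 0 := by
  have hprim : IsPrimitiveRoot (eta b) b := Complex.isPrimitiveRoot_exp b (by omega)
  have hterm : ∀ i, conj (eta b ^ (k * i)) * eta b ^ (l * i) =
      (conj (eta b ^ k) * eta b ^ l) ^ i := by
    intro i
    rw [mul_pow, ← map_pow, ← pow_mul, ← pow_mul]
  have hone : ∀ m, conj (eta b ^ m) * eta b ^ m = 1 := by
    intro m
    rw [mul_comm, Complex.mul_conj, Complex.normSq_eq_norm_sq, norm_pow, eta_norm]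
    simp
  simp only [hterm]
  split_ifs with h
  · subst h
    simp only [hone, one_pow, Finset.sum_const, Finset.card_range, nsmul_eq_mul, mul_one]
  · have hz : conj (eta b ^ k) * eta b ^ l ≠ 1 := by
      intro h1
      apply h
      refine hprim.pow_inj hk hl ?_
      calc eta b ^ k = eta b ^ k * (conj (eta b ^ k) * eta b ^ l) := by rw [h1, mul_one]
        _ = conj (eta b ^ k) * eta b ^ k * eta b ^ l := by ring
        _ = eta b ^ l := by rw [hone, one_mul]
    have hzb : (conj (eta b ^ k) * eta b ^ l) ^ b = 1 := by
      rw [mul_pow, ← map_pow, ← pow_mul, ← pow_mul, mul_comm k b, mul_comm l b, pow_mul, pow_mul,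
        hprim.pow_eq_one]
      simp
    have := geom_sum_mul (conj (eta b ^ k) * eta b ^ l) b
    rw [hzb, sub_self] at this
    exact (mul_eq_zero.1 this).resolve_right (sub_ne_zero.2 hz)

lemma walC_sum {ι : Type*} (b : ℕ) (S : Finset ι) (c : ι → ℝ) (f : ι → ℝ → ℝ)
    (hf : ∀ i, Continuous (f i)) (k : ℕ) :
    walC b (fun x => ∑ i ∈ S, c i * f i x) k = ∑ i ∈ S, (c i : ℂ) * walC b (f i) k := by
  unfold walC
  simp only [Complex.ofReal_sum, Complex.ofReal_mul, Finset.sum_mul]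
  rw [integral_finsetSum]
  · refine Finset.sum_congr rfl fun i _ => ?_
    rw [← integral_const_mul]
    simp only [mul_assoc]
  · intro i _
    exact integrable1 _ (continuous_const.mul (Complex.continuous_ofReal.comp (hf i))) _
      (Complex.continuous_conj.measurable.comp (walsh_measurable b k))
      (fun x => by simp [walsh_norm])

lemma walD_sum {ι : Type*} (b : ℕ) (S : Finset ι) (c : ι → ℝ) (h : ι → ℝ → ℝ → ℝ)
    (hh : ∀ i, Continuous fun z : ℝ × ℝ => h i z.1 z.2) (k l : ℕ) :
    walD b (fun x y => ∑ i ∈ S, c i * h i x y) k l = ∑ i ∈ S, (c i : ℂ) * walD b (h i) k l := by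
  have hD : ∀ h : ℝ → ℝ → ℝ, (Continuous fun z : ℝ × ℝ => h z.1 z.2) → walD b h k l =
      ∫ z, (h z.1 z.2 : ℂ) * conj (walsh b k z.1) * walsh b l z.2
        ∂((volume.restrict (Set.Ico (0 : ℝ) 1)).prod (volume.restrict (Set.Ico (0 : ℝ) 1))) := by
    intro h hc
    rw [integral_prod _ (integrable2 b h hc k l)]
    rfl
  rw [hD _ (continuous_finsetSum _ fun i _ => continuous_const.mul (hh i))]
  simp only [Complex.ofReal_sum, Complex.ofReal_mul, Finset.sum_mul]
  rw [integral_finsetSum]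
  · refine Finset.sum_congr rfl fun i _ => ?_
    rw [hD _ (hh i), ← integral_const_mul]
    simp only [mul_assoc]
  · intro i _
    have := (integrable2 b (h i) (hh i) k l).const_mul (c i : ℂ)
    simpa only [mul_assoc] using this

lemma walD_const_mul (b : ℕ) (c : ℝ) (h : ℝ → ℝ → ℝ) (k l : ℕ) :
    walD b (fun x y => c * h x y) k l = (c : ℂ) * walD b h k l := by
  unfold walD
  rw [← integral_const_mul]
  refine integral_congr_ae (Filter.Eventually.of_forall fun x => ?_)
  simp only
  rw [← integral_const_mul]
  simp only [Complex.ofReal_mul, mul_assoc]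

lemma walD_add (b : ℕ) (h h' : ℝ → ℝ → ℝ) (hh : Continuous fun z : ℝ × ℝ => h z.1 z.2)
    (hh' : Continuous fun z : ℝ × ℝ => h' z.1 z.2) (k l : ℕ) :
    walD b (fun x y => h x y + h' x y) k l = walD b h k l + walD b h' k l := by
  have := walD_sum b Finset.univ (fun _ : Bool => 1) (fun i => bif i then h else h')
    (by rintro (_ | _) <;> simpa) k l
  simpa using this

lemma walD_congr (b : ℕ) {h h' : ℝ → ℝ → ℝ}
    (hh : ∀ x ∈ Set.Ico (0 : ℝ) 1, ∀ y ∈ Set.Ico (0 : ℝ) 1, h x y = h' x y) (k l : ℕ) :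
    walD b h k l = walD b h' k l := by
  unfold walD
  refine setIntegral_congr_fun measurableSet_Ico fun x hx => ?_
  refine setIntegral_congr_fun measurableSet_Ico fun y hy => ?_
  simp only [hh x hx y hy]

lemma walD_sep (b : ℕ) (f g : ℝ → ℝ) (k l : ℕ) :
    walD b (fun x y => f x * g y) k l = walC b f k * conj (walC b g l) := by
  unfold walD walC
  rw [← integral_conj, ← integral_mul_const]
  refine integral_congr_ae (Filter.Eventually.of_forall fun x => ?_)
  simp only
  rw [← integral_const_mul]
  refine integral_congr_ae (Filter.Eventually.of_forall fun y => ?_)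
  simp only [map_mul, Complex.conj_conj, Complex.conj_ofReal, Complex.ofReal_mul]
  ring

lemma norm_setIntegral_Ico_le {f : ℝ → ℂ} (hf : ∀ x ∈ Set.Ico (0 : ℝ) 1, ‖f x‖ ≤ 1) :
    ‖∫ x in Set.Ico (0 : ℝ) 1, f x‖ ≤ 1 := by
  have := norm_setIntegral_le_of_norm_le_const (μ := volume) (s := Set.Ico (0 : ℝ) 1) (C := 1)
    (by simp) hf
  simpa using this

lemma walC_norm_le (b : ℕ) {f : ℝ → ℝ} (hf : ∀ x ∈ Set.Ico (0 : ℝ) 1, |f x| ≤ 1) (k : ℕ) :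
    ‖walC b f k‖ ≤ 1 := by
  refine norm_setIntegral_Ico_le fun x hx => ?_
  simpa [walsh_norm] using hf x hx

lemma walD_norm_le (b : ℕ) {h : ℝ → ℝ → ℝ}
    (hh : ∀ x ∈ Set.Ico (0 : ℝ) 1, ∀ y ∈ Set.Ico (0 : ℝ) 1, |h x y| ≤ 1) (k l : ℕ) :
    ‖walD b h k l‖ ≤ 1 := by
  refine norm_setIntegral_Ico_le fun x hx => norm_setIntegral_Ico_le fun y hy => ?_
  simpa [walsh_norm] using hh x hx y hy

/-- The Walsh coefficient of the monomial `x ^ p`. -/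
noncomputable def mom (b p k : ℕ) : ℂ := walC b (fun x => x ^ p) k

lemma mom_norm_le (b p k : ℕ) : ‖mom b p k‖ ≤ 1 := by
  refine walC_norm_le b (fun x hx => ?_) k
  rw [abs_of_nonneg (pow_nonneg hx.1 _)]
  exact pow_le_one₀ hx.1 hx.2.le

/-- Removing the lowest digit of `k`: the top-degree term only survives if that digit is `0`. -/
lemma mom_rec {b : ℕ} (hb : 1 < b) (p k : ℕ) : ∃ a : ℕ → ℂ, (∀ q ≤ p, ‖a q‖ ≤ 2 ^ p) ∧
    mom b p k = ∑ q ∈ Finset.range p, a q * mom b q (k / b) +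
      (if k % b = 0 then 1 / (b : ℂ) ^ p else 0) * mom b p (k / b) := by
  have hb0 : (0 : ℝ) < b := by positivity
  have hbc : (b : ℂ) ≠ 0 := by exact_mod_cast hb0.ne'
  refine ⟨fun q => (1 / (b : ℂ)) * ∑ i ∈ Finset.range b, conj (eta b ^ (k % b * i)) *
    (((p.choose q : ℝ) * (i : ℝ) ^ (p - q) / (b : ℝ) ^ p : ℝ) : ℂ), ?_, ?_⟩
  · intro q hq
    have h1 : ∀ i ∈ Finset.range b, ‖conj (eta b ^ (k % b * i)) *
        (((p.choose q : ℝ) * (i : ℝ) ^ (p - q) / (b : ℝ) ^ p : ℝ) : ℂ)‖ ≤ 2 ^ p := by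
      intro i hi
      have hib : (i : ℝ) ≤ b := by exact_mod_cast (Finset.mem_range.1 hi).le
      rw [norm_mul, RCLike.norm_conj, norm_pow, eta_norm, one_pow, one_mul, Complex.norm_real,
        Real.norm_of_nonneg (by positivity), div_le_iff₀ (by positivity)]
      have h2 : (p.choose q : ℝ) ≤ 2 ^ p := by exact_mod_cast Nat.choose_le_two_pow p q
      have h3 : (i : ℝ) ^ (p - q) ≤ (b : ℝ) ^ p :=
        (pow_le_pow_left₀ (by positivity) hib _).trans
          (pow_le_pow_right₀ (by exact_mod_cast hb.le) (Nat.sub_le _ _))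
      exact mul_le_mul h2 h3 (by positivity) (by positivity)
    rw [norm_mul, norm_div, norm_one, Complex.norm_natCast, one_div, inv_mul_le_iff₀ hb0]
    refine (norm_sum_le_of_le _ h1).trans ?_
    simp
  · have hexp : ∀ i : ℕ, walC b (fun x => ((i + x) / b) ^ p) (k / b) =
        ∑ q ∈ Finset.range (p + 1),
          (((p.choose q : ℝ) * (i : ℝ) ^ (p - q) / (b : ℝ) ^ p : ℝ) : ℂ) * mom b q (k / b) := by
      intro i
      unfold mom
      rw [← walC_sum _ _ _ _ (fun q => continuous_pow q)]
      congr 1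
      ext x
      rw [div_pow, add_comm, add_pow, Finset.sum_div]
      exact Finset.sum_congr rfl fun q _ => by ring
    rw [mom, walC_split hb _ (continuous_pow p)]
    simp only [hexp, Finset.sum_range_succ _ p, mul_add, Finset.sum_add_distrib]
    congr 1
    · simp only [Finset.mul_sum, Finset.sum_mul]
      rw [Finset.sum_comm]
      exact Finset.sum_congr rfl fun q _ => Finset.sum_congr rfl fun i _ => by ring
    · have h0 := charsum hb (Nat.mod_lt k (by omega : 0 < b)) (show 0 < b by omega)
      simp only [zero_mul, pow_zero, mul_one] at h0
      simp only [Nat.choose_self, Nat.sub_self, pow_zero, Nat.cast_one, mul_one]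
      simp only [← mul_assoc]
      rw [← Finset.sum_mul, ← Finset.sum_mul, h0]
      split_ifs
      · push_cast
        field_simp
      · simp

/-- Polynomials of degree `p` have zero Walsh coefficients at all `k` with more than `p` nonzero
digits. -/
lemma mom_zero {b : ℕ} (hb : 1 < b) (n : ℕ) : ∀ p k, p < kap b n k → mom b p k = 0 := by
  induction n with
  | zero => intro p k h; simp [kap_zero] at h
  | succ n ih =>
    intro p k h
    rw [kap_succ] at h
    obtain ⟨a, -, ha⟩ := mom_rec hb p k
    rw [ha, Finset.sum_eq_zero, zero_add]
    · split_ifs at h ⊢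
      · rw [ih p _ (by omega), mul_zero]
      · simp
    · intro q hq
      have := Finset.mem_range.1 hq
      rw [ih q _ (by split_ifs at h <;> omega), mul_zero]

/-- The Walsh coefficients of `x ^ p` decay like `b ^ (-μ(k))`, where `μ(k)` is the sum of all
positions of nonzero digits of `k`. -/
lemma mom_bound {b : ℕ} (hb : 1 < b) (p : ℕ) : ∃ C : ℝ, 0 ≤ C ∧ ∀ n k,
    ‖mom b p k‖ * (b : ℝ) ^ muF b n k ≤ C := by
  have hb1 : (1 : ℝ) < b := by exact_mod_cast hb
  have hb2 : (2 : ℝ) ≤ b := by exact_mod_cast hb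
  induction p using Nat.strong_induction_on with
  | _ p ihp =>
  choose! C hC0 hC using ihp
  set D : ℝ := ∑ q ∈ Finset.range p, 2 ^ p * C q with hD
  have hD0 : 0 ≤ D := Finset.sum_nonneg fun q hq =>
    mul_nonneg (by positivity) (hC0 q (Finset.mem_range.1 hq))
  refine ⟨2 * D * (b : ℝ) ^ p + 1, by positivity, fun n => ?_⟩
  induction n with
  | zero =>
    intro k
    have := mom_norm_le b p k
    have h2 : 0 ≤ 2 * D * (b : ℝ) ^ p := by positivity
    simp only [muF, pow_zero, mul_one]
    linarith
  | succ n ih =>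
    intro k
    by_cases hk : p < kap b (n + 1) k
    · rw [mom_zero hb _ _ _ hk]; simp; positivity
    obtain ⟨a, han, ha⟩ := mom_rec hb p k
    set R := ∑ q ∈ Finset.range p, a q * mom b q (k / b) with hR
    have hRb : ‖R‖ * (b : ℝ) ^ muF b n (k / b) ≤ D := by
      rw [hR]
      refine (mul_le_mul_of_nonneg_right (norm_sum_le _ _) (by positivity)).trans ?_
      rw [Finset.sum_mul]
      refine Finset.sum_le_sum fun q hq => ?_
      have hq := Finset.mem_range.1 hq
      rw [norm_mul, mul_assoc]
      exact mul_le_mul (han q hq.le) (hC q hq n _) (by positivity) (by positivity)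
    have hih := ih (k / b)
    set M := (b : ℝ) ^ muF b n (k / b) with hM
    have hM0 : 0 < M := by positivity
    simp only [muF]
    rw [pow_add, ← hM]
    have hDp : D * (b : ℝ) ^ kap b (n + 1) k ≤ D * (b : ℝ) ^ p :=
      mul_le_mul_of_nonneg_left (pow_le_pow_right₀ hb1.le (by omega)) hD0
    have hDp0 : 0 ≤ D * (b : ℝ) ^ p := by positivity
    have hRk : ‖R‖ * ((b : ℝ) ^ kap b (n + 1) k * M) ≤ D * (b : ℝ) ^ p := by
      calc ‖R‖ * ((b : ℝ) ^ kap b (n + 1) k * M) = (‖R‖ * M) * (b : ℝ) ^ kap b (n + 1) k := by ring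
        _ ≤ D * (b : ℝ) ^ kap b (n + 1) k := by gcongr
        _ ≤ _ := hDp
    rw [ha]
    split_ifs with h0
    · have hks : kap b (n + 1) k = kap b n (k / b) := by rw [kap_succ]; simp [h0]
      have hnorm : ‖1 / (b : ℂ) ^ p * mom b p (k / b)‖ = ‖mom b p (k / b)‖ / (b : ℝ) ^ p := by
        rw [norm_mul, norm_div, norm_one, norm_pow, Complex.norm_natCast]; ring
      rcases eq_or_lt_of_le (not_lt.1 hk) with hkp | hkp
      · have hR0 : R = 0 := Finset.sum_eq_zero fun q hq => by
          rw [mom_zero hb n q _ (by rw [← hks, hkp]; exact Finset.mem_range.1 hq), mul_zero]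
        rw [hR0, zero_add, hnorm, hkp]
        calc ‖mom b p (k / b)‖ / (b : ℝ) ^ p * ((b : ℝ) ^ p * M) = ‖mom b p (k / b)‖ * M := by
              field_simp
          _ ≤ _ := hih
      · refine (mul_le_mul_of_nonneg_right (norm_add_le _ _) (by positivity)).trans ?_
        rw [add_mul, hnorm]
        have hbb : (b : ℝ) ^ kap b (n + 1) k * 2 ≤ (b : ℝ) ^ p := by
          calc (b : ℝ) ^ kap b (n + 1) k * 2 ≤ (b : ℝ) ^ kap b (n + 1) k * b := by gcongr
            _ = (b : ℝ) ^ (kap b (n + 1) k + 1) := by rw [pow_succ]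
            _ ≤ _ := pow_le_pow_right₀ hb1.le hkp
        have h3 : ‖mom b p (k / b)‖ / (b : ℝ) ^ p * ((b : ℝ) ^ kap b (n + 1) k * M) ≤
            ‖mom b p (k / b)‖ * M / 2 := by
          rw [div_mul_eq_mul_div, div_le_div_iff₀ (by positivity) (by norm_num)]
          calc ‖mom b p (k / b)‖ * ((b : ℝ) ^ kap b (n + 1) k * M) * 2
              = ‖mom b p (k / b)‖ * M * ((b : ℝ) ^ kap b (n + 1) k * 2) := by ring
            _ ≤ _ := by gcongr
        linarith
    · rw [zero_mul, add_zero]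
      linarith

/-! ### Walsh coefficients of powers of the distance -/

/-- The Walsh coefficients of `(u + (x - y)) ^ n`, expanded into monomials. -/
lemma walD_pow (b n : ℕ) (u : ℝ) (k l : ℕ) :
    walD b (fun x y => (u + (x - y)) ^ n) k l =
      ∑ σ ∈ (Finset.range (n + 1)).sigma fun m => Finset.range (m + 1),
        (((n.choose σ.1 : ℝ) * u ^ (n - σ.1) * (σ.1.choose σ.2 : ℝ) * (-1) ^ (σ.1 - σ.2) : ℝ) : ℂ) *
          (mom b σ.2 k * conj (mom b (σ.1 - σ.2) l)) := by
  unfold mom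
  simp only [← walD_sep]
  rw [← walD_sum _ _ _ _ (fun σ => by fun_prop)]
  congr 1
  ext x y
  rw [add_comm, add_pow, Finset.sum_sigma]
  refine Finset.sum_congr rfl fun m _ => ?_
  rw [sub_eq_add_neg, add_pow, Finset.sum_mul, Finset.sum_mul]
  refine Finset.sum_congr rfl fun p _ => ?_
  rw [neg_pow]
  ring

/-- A polynomial in `x - y` of degree `n` has zero Walsh coefficient at `(k, l)` if `k` and `l` have
more than `n` nonzero digits in total. -/
lemma walD_pow_zero {b : ℕ} (hb : 1 < b) (n N : ℕ) (u : ℝ) (k l : ℕ)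
    (h : n < kap b N k + kap b N l) : walD b (fun x y => (u + (x - y)) ^ n) k l = 0 := by
  rw [walD_pow]
  refine Finset.sum_eq_zero fun σ hσ => ?_
  simp only [Finset.mem_sigma, Finset.mem_range] at hσ
  by_cases h1 : σ.2 < kap b N k
  · rw [mom_zero hb N _ _ h1]; simp
  · rw [mom_zero hb N (σ.1 - σ.2) l (by omega)]; simp

lemma mom_mul_bound {b : ℕ} (hb : 1 < b) (p q : ℕ) : ∃ C : ℝ, 0 ≤ C ∧ ∀ n k,
    ‖mom b p k * conj (mom b q k)‖ * (b : ℝ) ^ (2 * muF b n k) ≤ C := by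
  obtain ⟨C, hC0, hC⟩ := mom_bound hb p
  obtain ⟨D, hD0, hD⟩ := mom_bound hb q
  refine ⟨C * D, by positivity, fun n k => ?_⟩
  rw [norm_mul, RCLike.norm_conj, two_mul, pow_add, mul_mul_mul_comm]
  exact mul_le_mul (hC n k) (hD n k) (by positivity) hC0

/-- A finite linear combination of quantities of size `O(W)` is of size `O(W)`. -/
lemma lincomb_bound {ι κ : Type*} (S : Finset ι) (f : ι → κ → ℂ) (W : κ → ℝ) (hW : ∀ t, 0 ≤ W t)
    (h : ∀ i ∈ S, ∃ C : ℝ, 0 ≤ C ∧ ∀ t, ‖f i t‖ * W t ≤ C) (M : ℝ) (hM : 0 ≤ M) :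
    ∃ C : ℝ, 0 ≤ C ∧ ∀ c : ι → ℂ, (∀ i ∈ S, ‖c i‖ ≤ M) → ∀ t, ‖∑ i ∈ S, c i * f i t‖ * W t ≤ C := by
  choose! C hC0 hC using h
  refine ⟨∑ i ∈ S, M * C i, Finset.sum_nonneg fun i hi => mul_nonneg hM (hC0 i hi),
    fun c hc t => ?_⟩
  refine (mul_le_mul_of_nonneg_right (norm_sum_le _ _) (hW t)).trans ?_
  rw [Finset.sum_mul]
  refine Finset.sum_le_sum fun i hi => ?_
  rw [norm_mul, mul_assoc]
  exact mul_le_mul (hc i hi) (hC i hi t) (mul_nonneg (norm_nonneg _) (hW t)) hM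

lemma lincomb_bound_const {ι κ : Type*} (S : Finset ι) (f : ι → κ → ℂ) (W : κ → ℝ)
    (hW : ∀ t, 0 ≤ W t) (h : ∀ i ∈ S, ∃ C : ℝ, 0 ≤ C ∧ ∀ t, ‖f i t‖ * W t ≤ C) (c : ι → ℂ) :
    ∃ C : ℝ, 0 ≤ C ∧ ∀ t, ‖∑ i ∈ S, c i * f i t‖ * W t ≤ C := by
  obtain ⟨C, hC0, hC⟩ := lincomb_bound S f W hW h (∑ i ∈ S, ‖c i‖)
    (Finset.sum_nonneg fun i _ => norm_nonneg _)
  exact ⟨C, hC0, hC c fun i hi => Finset.single_le_sum (f := fun i => ‖c i‖)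
    (fun i _ => norm_nonneg _) hi⟩

lemma walD_pow_bound {b : ℕ} (hb : 1 < b) (n : ℕ) (u : ℝ) : ∃ C : ℝ, 0 ≤ C ∧ ∀ t : ℕ × ℕ,
    ‖walD b (fun x y => (u + (x - y)) ^ n) t.2 t.2‖ * (b : ℝ) ^ (2 * muF b t.1 t.2) ≤ C := by
  simp only [walD_pow]
  refine lincomb_bound_const _ (fun (σ : (_ : ℕ) × ℕ) (t : ℕ × ℕ) =>
    mom b σ.2 t.2 * conj (mom b (σ.1 - σ.2) t.2)) _ (fun t => by positivity) (fun σ _ => ?_) _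
  obtain ⟨C, h0, h1⟩ := mom_mul_bound hb σ.2 (σ.1 - σ.2)
  exact ⟨C, h0, fun t => h1 _ _⟩

/-- The Walsh coefficient of `|x - y| ^ n`. -/
noncomputable def absD (b n k l : ℕ) : ℂ := walD b (fun x y => |x - y| ^ n) k l

lemma absD_even (b : ℕ) {n : ℕ} (hn : Even n) (k l : ℕ) :
    absD b n k l = walD b (fun x y => (0 + (x - y)) ^ n) k l := by
  unfold absD
  simp only [hn.pow_abs, zero_add]

lemma absD_norm_le (b n k l : ℕ) : ‖absD b n k l‖ ≤ 1 := by
  refine walD_norm_le b (fun x hx y hy => ?_) k l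
  rw [abs_of_nonneg (by positivity)]
  refine pow_le_one₀ (abs_nonneg _) ?_
  rw [abs_le]
  constructor <;> linarith [hx.1, hx.2, hy.1, hy.2]

/-- Removing the lowest digits of `k` and `l`: on the off-diagonal squares of side `1/b` the
function `|x - y| ^ n` is a polynomial, and the diagonal squares reproduce it. -/
lemma absD_rec {b : ℕ} (hb : 1 < b) (n k l : ℕ) : ∃ c : ℕ × ℕ → ℂ, (∀ z, ‖c z‖ ≤ 1) ∧
    absD b n k l = (if k % b = l % b then 1 / (b : ℂ) ^ (n + 1) else 0) * absD b n (k / b) (l / b) +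
      ∑ z ∈ Finset.range b ×ˢ Finset.range b, c z *
        walD b (fun x y => (((z.1 : ℝ) - z.2) + (x - y)) ^ n) (k / b) (l / b) := by
  have hb1 : (1 : ℝ) < b := by exact_mod_cast hb
  have hb0 : (0 : ℝ) < b := by positivity
  have hbc : (b : ℂ) ≠ 0 := by exact_mod_cast hb0.ne'
  let sg : ℕ → ℕ → ℝ := fun i j => if i = j then 0 else if j < i then 1 else (-1) ^ n
  have hsg : ∀ i j, |sg i j| ≤ 1 := by
    intro i j
    simp only [sg]
    split_ifs <;> simp
  refine ⟨fun z => 1 / (b : ℂ) ^ 2 * (conj (eta b ^ (k % b * z.1)) * eta b ^ (l % b * z.2)) *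
    ((1 / (b : ℝ) ^ n * sg z.1 z.2 : ℝ) : ℂ), ?_, ?_⟩
  · intro z
    simp only [norm_mul, norm_div, norm_one, RCLike.norm_conj, norm_pow, eta_norm, one_pow, mul_one,
      Complex.norm_natCast, Complex.norm_real, Real.norm_eq_abs, Nat.abs_cast]
    have h1 : 1 / (b : ℝ) ^ 2 ≤ 1 := by
      rw [div_le_one (by positivity)]; exact one_le_pow₀ hb1.le
    have h2 : 1 / (b : ℝ) ^ n ≤ 1 := by
      rw [div_le_one (by positivity)]; exact one_le_pow₀ hb1.le
    exact mul_le_one₀ h1 (by positivity) (mul_le_one₀ h2 (abs_nonneg _) (hsg _ _))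
  · have hpc : Continuous fun z : ℝ × ℝ => |z.1 - z.2| ^ n := by fun_prop
    have hterm : ∀ i j : ℕ, walD b (fun x y => |(i + x) / b - (j + y) / b| ^ n) (k / b) (l / b) =
        (if i = j then 1 / (b : ℂ) ^ n else 0) * absD b n (k / b) (l / b) +
        ((1 / (b : ℝ) ^ n * sg i j : ℝ) : ℂ) *
          walD b (fun x y => (((i : ℝ) - j) + (x - y)) ^ n) (k / b) (l / b) := by
      intro i j
      have habs : ∀ x y : ℝ, |(i + x) / b - (j + y) / b| ^ n =
          1 / (b : ℝ) ^ n * |((i : ℝ) - j) + (x - y)| ^ n := by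
        intro x y
        rw [← sub_div, abs_div, div_pow, abs_of_pos hb0]
        rw [show (i : ℝ) + x - (j + y) = ((i : ℝ) - j) + (x - y) by ring]
        ring
      simp only [habs]
      rw [walD_const_mul]
      rcases lt_trichotomy i j with hij | hij | hij
      · have hij' : (i : ℝ) + 1 ≤ j := by exact_mod_cast hij
        rw [walD_congr b (h' := fun x y => (-1) ^ n * (((i : ℝ) - j) + (x - y)) ^ n)]
        · rw [walD_const_mul]
          simp only [sg, hij.ne, hij.not_gt, if_false]
          push_cast
          ring
        · intro x hx y hy
          rw [abs_of_nonpos (by linarith [hx.2, hy.1]), neg_pow]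
      · subst hij
        simp [sg, absD]
      · have hij' : (j : ℝ) + 1 ≤ i := by exact_mod_cast hij
        rw [walD_congr b (h' := fun x y => (((i : ℝ) - j) + (x - y)) ^ n)]
        · simp only [sg, hij.ne', hij, if_false, if_true]
          push_cast
          ring
        · intro x hx y hy
          rw [abs_of_nonneg (by linarith [hx.1, hy.2])]
    rw [absD, walD_split hb _ hpc, Finset.sum_product]
    simp only [hterm, mul_add, Finset.sum_add_distrib]
    congr 1
    · have h0 := charsum hb (Nat.mod_lt k (by omega : 0 < b)) (Nat.mod_lt l (by omega : 0 < b))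
      have h1 : ∀ i ∈ Finset.range b, ∑ j ∈ Finset.range b,
          conj (eta b ^ (k % b * i)) * eta b ^ (l % b * j) *
            ((if i = j then 1 / (b : ℂ) ^ n else 0) * absD b n (k / b) (l / b)) =
          conj (eta b ^ (k % b * i)) * eta b ^ (l % b * i) *
            (1 / (b : ℂ) ^ n * absD b n (k / b) (l / b)) := by
        intro i hi
        rw [Finset.sum_eq_single i]
        · simp
        · intro j _ hj
          simp [hj.symm]
        · intro h; exact absurd hi h
      rw [Finset.sum_congr rfl h1, ← Finset.sum_mul, h0]
      split_ifs
      · field_simp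
        ring
      · simp
    · simp only [Finset.mul_sum]
      exact Finset.sum_congr rfl fun i _ => Finset.sum_congr rfl fun j _ => by ring

/-- `|x - y| ^ n` has zero Walsh coefficient at `(k, l)` if `k` and `l` differ in more than `n + 1`
digits. -/
lemma absD_zero {b : ℕ} (hb : 1 < b) (n N : ℕ) : ∀ k l, n + 1 < hd b N k l → absD b n k l = 0 := by
  induction N with
  | zero => intro k l h; simp [hd] at h
  | succ N ih =>
    intro k l h
    rw [hd_succ] at h
    have h1 := hd_le b N (k / b) (l / b)
    obtain ⟨c, -, hc⟩ := absD_rec hb n k l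
    rw [hc, Finset.sum_eq_zero, add_zero]
    · split_ifs at h ⊢
      · rw [ih _ _ (by omega), mul_zero]
      · simp
    · intro z _
      rw [walD_pow_zero hb n N _ _ _ (by split_ifs at h <;> omega), mul_zero]

/-- The diagonal Walsh coefficients of `|x - y| ^ (2α - 1)` decay like `b ^ (-2 μ_α(k))`.
A number `k` with fewer than `α` nonzero digits gains a factor `b⁻²` per digit, so that the
polynomial remainders sum up; the remainders vanish above `α` nonzero digits. -/
lemma absD_diag_bound {b α : ℕ} (hb : 1 < b) (hα : 0 < α) : ∃ C : ℝ, 0 ≤ C ∧ ∀ N k,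
    ‖absD b (2 * α - 1) k k‖ * (b : ℝ) ^ (2 * mu b α N k) ≤ C := by
  have hb1 : (1 : ℝ) < b := by exact_mod_cast hb
  have hb2 : (2 : ℝ) ≤ b := by exact_mod_cast hb
  have hb0 : (0 : ℝ) < b := by positivity
  obtain ⟨D, hD0, hD⟩ := lincomb_bound (Finset.range b ×ˢ Finset.range b)
    (fun (z : ℕ × ℕ) (t : ℕ × ℕ) =>
      walD b (fun x y => (((z.1 : ℝ) - z.2) + (x - y)) ^ (2 * α - 1)) t.2 t.2)
    (fun t => (b : ℝ) ^ (2 * muF b t.1 t.2)) (fun t => by positivity)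
    (fun z _ => walD_pow_bound hb _ _) 1 zero_le_one
  set E : ℝ := D * (b : ℝ) ^ (2 * α) with hE
  have hE0 : 0 ≤ E := by positivity
  suffices h : ∀ N k, ‖absD b (2 * α - 1) k k‖ * (b : ℝ) ^ (2 * mu b α N k) ≤
      if kap b N k < α then 2 * E + 1 else 3 * E + 1 by
    refine ⟨3 * E + 1, by positivity, fun N k => (h N k).trans ?_⟩
    split_ifs <;> linarith
  intro N
  induction N with
  | zero =>
    intro k
    have := absD_norm_le b (2 * α - 1) k k
    rw [kap_zero, if_pos hα]
    simp only [mu, mul_zero, pow_zero, mul_one]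
    linarith
  | succ N ih =>
    intro k
    have hih := ih (k / b)
    obtain ⟨c, hc1, hc⟩ := absD_rec hb (2 * α - 1) k k
    have hDk := hD c (fun z _ => hc1 z) (N, k / b)
    simp only at hDk
    set R := ∑ z ∈ Finset.range b ×ˢ Finset.range b, c z *
        walD b (fun x y => (((z.1 : ℝ) - z.2) + (x - y)) ^ (2 * α - 1)) (k / b) (k / b) with hR
    have hR0 : α ≤ kap b N (k / b) → R = 0 := fun h => Finset.sum_eq_zero fun z _ => by
      rw [walD_pow_zero hb _ N _ _ _ (by omega), mul_zero]
    rw [if_pos rfl, show 2 * α - 1 + 1 = 2 * α by omega] at hc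
    have hnorm : ‖absD b (2 * α - 1) k k‖ ≤
        ‖absD b (2 * α - 1) (k / b) (k / b)‖ / (b : ℝ) ^ (2 * α) + ‖R‖ := by
      rw [hc]
      refine (norm_add_le _ _).trans (le_of_eq ?_)
      rw [norm_mul, norm_div, norm_one, norm_pow, Complex.norm_natCast]
      ring
    set F := ‖absD b (2 * α - 1) (k / b) (k / b)‖ with hF
    have hF0 : 0 ≤ F := norm_nonneg _
    have hks : kap b N (k / b) ≤ kap b (N + 1) k := by rw [kap_succ]; omega
    have hRM : ‖R‖ * (b : ℝ) ^ (2 * mu b α N (k / b)) ≤ D := by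
      refine le_trans ?_ hDk
      gcongr
      · exact hb1.le
      · exact mu_le_muF _ _ _ _
    simp only [mu]
    set M := (b : ℝ) ^ (2 * mu b α N (k / b)) with hM
    have hM0 : 0 < M := by positivity
    rw [mul_add, pow_add, ← hM]
    refine (mul_le_mul_of_nonneg_right hnorm (by positivity)).trans ?_
    by_cases hκ : kap b (N + 1) k < α
    · rw [if_pos hκ, min_eq_right hκ.le]
      rw [if_pos (by omega)] at hih
      have hp1 : (b : ℝ) ^ (2 * kap b (N + 1) k) * 2 ≤ (b : ℝ) ^ (2 * α) := by
        calc (b : ℝ) ^ (2 * kap b (N + 1) k) * 2 ≤ (b : ℝ) ^ (2 * kap b (N + 1) k) * b := by gcongr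
          _ = (b : ℝ) ^ (2 * kap b (N + 1) k + 1) := by rw [pow_succ]
          _ ≤ _ := pow_le_pow_right₀ hb1.le (by omega)
      set Q := (b : ℝ) ^ (2 * kap b (N + 1) k) with hQ
      have hQ0 : 0 < Q := by positivity
      have h1 : F / (b : ℝ) ^ (2 * α) * (Q * M) ≤ F * M / 2 := by
        rw [div_mul_eq_mul_div, div_le_div_iff₀ (by positivity) (by norm_num)]
        calc F * (Q * M) * 2 = F * M * (Q * 2) := by ring
          _ ≤ _ := by gcongr
      have h2 : ‖R‖ * (Q * M) ≤ E := by
        calc ‖R‖ * (Q * M) = (‖R‖ * M) * Q := by ring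
          _ ≤ D * (b : ℝ) ^ (2 * α) := by
            refine mul_le_mul hRM ?_ hQ0.le hD0
            linarith
      rw [add_mul]
      linarith
    · rw [if_neg hκ, min_eq_left (by omega)]
      have h1 : F / (b : ℝ) ^ (2 * α) * ((b : ℝ) ^ (2 * α) * M) = F * M := by field_simp
      rw [add_mul, h1]
      by_cases hκ' : kap b N (k / b) < α
      · rw [if_pos hκ'] at hih
        have h2 : ‖R‖ * ((b : ℝ) ^ (2 * α) * M) ≤ E := by
          calc ‖R‖ * ((b : ℝ) ^ (2 * α) * M) = (‖R‖ * M) * (b : ℝ) ^ (2 * α) := by ring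
            _ ≤ _ := by rw [hE]; gcongr
        linarith
      · rw [if_neg hκ'] at hih
        rw [hR0 (by omega)]
        simpa using hih

/-! ### Walsh coefficients of the kernel -/

lemma bernoulliPoly_eq (r : ℕ) (x : ℝ) : bernoulliPoly r x =
    ∑ i ∈ Finset.range (r + 1), (((bernoulli i * r.choose i : ℚ)) : ℝ) * x ^ (r - i) := by
  unfold bernoulliPoly Polynomial.bernoulli
  rw [map_sum]
  refine Finset.sum_congr rfl fun i _ => ?_
  rw [Polynomial.aeval_monomial]
  rfl

lemma bernoulliPoly_continuous (r : ℕ) : Continuous (bernoulliPoly r) := by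
  have : bernoulliPoly r = fun x => ∑ i ∈ Finset.range (r + 1),
      (((bernoulli i * r.choose i : ℚ)) : ℝ) * x ^ (r - i) := funext (bernoulliPoly_eq r)
  rw [this]
  fun_prop

lemma walC_bernoulli (b r k : ℕ) : walC b (bernoulliPoly r) k =
    ∑ i ∈ Finset.range (r + 1),
      ((((bernoulli i * r.choose i : ℚ)) : ℝ) : ℂ) * mom b (r - i) k := by
  unfold mom
  rw [← walC_sum _ _ _ _ (fun q => continuous_pow _)]
  congr 1
  exact funext (bernoulliPoly_eq r)

lemma walC_bernoulli_zero {b : ℕ} (hb : 1 < b) (r n k : ℕ) (h : r < kap b n k) :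
    walC b (bernoulliPoly r) k = 0 := by
  rw [walC_bernoulli]
  exact Finset.sum_eq_zero fun i _ => by rw [mom_zero hb n _ _ (by omega), mul_zero]

lemma walC_bernoulli_bound {b : ℕ} (hb : 1 < b) (r : ℕ) : ∃ C : ℝ, 0 ≤ C ∧ ∀ t : ℕ × ℕ,
    ‖walC b (bernoulliPoly r) t.2‖ * (b : ℝ) ^ muF b t.1 t.2 ≤ C := by
  simp only [walC_bernoulli]
  refine lincomb_bound_const _ (fun (i : ℕ) (t : ℕ × ℕ) => mom b (r - i) t.2) _
    (fun t => by positivity) (fun i _ => ?_) _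
  obtain ⟨C, h0, h1⟩ := mom_bound hb (r - i)
  exact ⟨C, h0, fun t => h1 _ _⟩

lemma Khat_eq (b α k l : ℕ) : Khat b α k l =
    ∑ r ∈ Finset.range (α + 1), ((1 / (r.factorial : ℝ) ^ 2 : ℝ) : ℂ) *
      (walC b (bernoulliPoly r) k * conj (walC b (bernoulliPoly r) l)) +
    (((-1) ^ (α + 1) / ((2 * α).factorial : ℝ) : ℝ) : ℂ) *
      ∑ i ∈ Finset.range (2 * α + 1),
        ((((bernoulli i * (2 * α).choose i : ℚ)) : ℝ) : ℂ) * absD b (2 * α - i) k l := by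
  have hB := bernoulliPoly_continuous
  have hK : Kker α = fun x y =>
      (∑ r ∈ Finset.range (α + 1), (1 / (r.factorial : ℝ) ^ 2) *
        (bernoulliPoly r x * bernoulliPoly r y)) +
      ((-1) ^ (α + 1) / ((2 * α).factorial : ℝ)) * ∑ i ∈ Finset.range (2 * α + 1),
        (((bernoulli i * (2 * α).choose i : ℚ)) : ℝ) * |x - y| ^ (2 * α - i) := by
    ext x y
    unfold Kker
    rw [bernoulliPoly_eq (2 * α)]
    congr 1
    · exact Finset.sum_congr rfl fun r _ => by ring
    · ring
  change walD b (Kker α) k l = _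
  rw [hK, walD_add, walD_sum, walD_const_mul, walD_sum]
  · simp only [walD_sep, absD]
  · intro i; fun_prop
  · intro r
    exact ((hB r).comp continuous_fst).mul ((hB r).comp continuous_snd)
  · refine continuous_finsetSum _ fun r _ => continuous_const.mul ?_
    exact ((hB r).comp continuous_fst).mul ((hB r).comp continuous_snd)
  · fun_prop

/-- The Walsh coefficients of the kernel vanish unless `k` and `l` differ in at most `2α`
digits. -/
lemma Khat_zero {b α : ℕ} (hb : 1 < b) (n k l : ℕ) (h : 2 * α < hd b n k l) :
    Khat b α k l = 0 := by
  have h1 := hd_le b n k l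
  rw [Khat_eq, Finset.sum_eq_zero, Finset.sum_eq_zero, mul_zero, add_zero]
  · intro i hi
    rcases Nat.eq_zero_or_pos i with h0 | h0
    · subst h0
      rw [absD_even b (by simp), walD_pow_zero hb _ n _ _ _ (by omega), mul_zero]
    · have := Finset.mem_range.1 hi
      rw [absD_zero hb _ n _ _ (by omega), mul_zero]
  · intro r hr
    have := Finset.mem_range.1 hr
    by_cases h2 : r < kap b n k
    · rw [walC_bernoulli_zero hb r n k h2]; simp
    · rw [walC_bernoulli_zero hb r n l (by omega)]; simp

/-- The diagonal Walsh coefficients of the kernel decay like `b ^ (-2 μ_α(k))`. -/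
lemma Khat_diag_bound {b α : ℕ} (hb : 1 < b) (hα : 0 < α) : ∃ C : ℝ, 0 < C ∧ ∀ n k,
    ‖Khat b α k k‖ ≤ C * ((b : ℝ) ^ (2 * mu b α n k))⁻¹ := by
  have hb1 : (1 : ℝ) ≤ b := by exact_mod_cast hb.le
  have hmuF : ∀ t : ℕ × ℕ, (b : ℝ) ^ (2 * mu b α t.1 t.2) ≤ (b : ℝ) ^ (2 * muF b t.1 t.2) :=
    fun t => pow_le_pow_right₀ hb1 (Nat.mul_le_mul_left 2 (mu_le_muF _ _ _ _))
  obtain ⟨C, hC0, hC⟩ := lincomb_bound_const (Finset.range (α + 1))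
    (fun (r : ℕ) (t : ℕ × ℕ) =>
      walC b (bernoulliPoly r) t.2 * conj (walC b (bernoulliPoly r) t.2))
    (fun t => (b : ℝ) ^ (2 * mu b α t.1 t.2)) (fun t => by positivity) (fun r _ => by
      obtain ⟨C, h0, h1⟩ := walC_bernoulli_bound hb r
      refine ⟨C * C, by positivity, fun t => ?_⟩
      refine (mul_le_mul_of_nonneg_left (hmuF t) (norm_nonneg _)).trans ?_
      rw [norm_mul, RCLike.norm_conj, two_mul, pow_add, mul_mul_mul_comm]
      exact mul_le_mul (h1 t) (h1 t) (by positivity) h0)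
    (fun r => ((1 / (r.factorial : ℝ) ^ 2 : ℝ) : ℂ))
  -- the odd Bernoulli numbers beyond the first vanish, so the only odd power is `2α - 1`
  obtain ⟨D, hD0, hD⟩ := lincomb_bound_const (Finset.range (2 * α + 1))
    (fun (i : ℕ) (t : ℕ × ℕ) =>
      ((((bernoulli i * (2 * α).choose i : ℚ)) : ℝ) : ℂ) * absD b (2 * α - i) t.2 t.2)
    (fun t => (b : ℝ) ^ (2 * mu b α t.1 t.2)) (fun t => by positivity) (fun i hi => by
      have hi := Finset.mem_range.1 hi
      suffices h : bernoulli i = 0 ∨ ∃ C : ℝ, 0 ≤ C ∧ ∀ t : ℕ × ℕ,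
          ‖absD b (2 * α - i) t.2 t.2‖ * (b : ℝ) ^ (2 * mu b α t.1 t.2) ≤ C by
        rcases h with h | ⟨C, h0, h1⟩
        · exact ⟨0, le_rfl, fun t => by simp [h]⟩
        · refine ⟨‖((((bernoulli i * (2 * α).choose i : ℚ)) : ℝ) : ℂ)‖ * C, by positivity,
            fun t => ?_⟩
          rw [norm_mul, mul_assoc]
          exact mul_le_mul_of_nonneg_left (h1 t) (norm_nonneg _)
      rcases Nat.even_or_odd i with he | ho
      · right
        obtain ⟨C, h0, h1⟩ := walD_pow_bound hb (2 * α - i) 0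
        refine ⟨C, h0, fun t => ?_⟩
        rw [absD_even b ((Nat.even_sub (by omega)).2 (by simp [he]))]
        exact (mul_le_mul_of_nonneg_left (hmuF t) (norm_nonneg _)).trans (h1 t)
      · rcases eq_or_ne i 1 with h1 | h1
        · right
          subst h1
          obtain ⟨C, h0, h1⟩ := absD_diag_bound hb hα
          exact ⟨C, h0, fun t => h1 _ _⟩
        · left
          refine bernoulli_eq_zero_of_odd ho ?_
          have := ho.pos
          omega)
    (fun i => (((-1) ^ (α + 1) / ((2 * α).factorial : ℝ) : ℝ) : ℂ))
  refine ⟨C + D + 1, by positivity, fun n k => ?_⟩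
  have hpos : (0 : ℝ) < (b : ℝ) ^ (2 * mu b α n k) := by positivity
  rw [← div_eq_mul_inv, le_div_iff₀ hpos, Khat_eq, Finset.mul_sum]
  refine (mul_le_mul_of_nonneg_right (norm_add_le _ _) hpos.le).trans ?_
  rw [add_mul]
  have h1 := hC (n, k)
  have h2 := hD (n, k)
  simp only at h1 h2
  linarith

/-- The multivariate coefficients factorise. -/
lemma KhatS_eq_prod (b α s : ℕ) (k l : Fin s → ℕ) :
    KhatS b α s k l = ∏ j, Khat b α (k j) (l j) := by
  unfold KhatS Khat walshVec
  have h : ∀ x : Fin s → ℝ, (∫ y in Set.univ.pi fun _ : Fin s => Set.Ico (0 : ℝ) 1,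
      ((∏ j, Kker α (x j) (y j) : ℝ) : ℂ) * conj (∏ j, walsh b (k j) (x j)) *
        ∏ j, walsh b (l j) (y j)) =
      ∏ j, ∫ y in Set.Ico (0 : ℝ) 1, (Kker α (x j) y : ℂ) * conj (walsh b (k j) (x j)) *
        walsh b (l j) y := by
    intro x
    rw [volume_pi, Measure.restrict_pi_pi, ← integral_fintype_prod_eq_prod]
    refine integral_congr_ae (Filter.Eventually.of_forall fun y => ?_)
    simp only [Complex.ofReal_prod, map_prod, Finset.prod_mul_distrib]
  simp only [h]
  rw [volume_pi, Measure.restrict_pi_pi, ← integral_fintype_prod_eq_prod]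

/-- Proposition 1: the main part. Under the assumptions of the main
theorem, there is `A > 0` such that for all `w`, the digital net `P` of the paper's
construction with `N = b^{gw}` points satisfies
`∑_{k,l ∈ P⊥\{0}} |K̂_{α,s}(k,l)| ≤ A (log N)^{s-1} / N^{2α}`. -/
theorem main_part_bound
    (b s α β g : ℕ) (hb : b.Prime) (hs : 0 < s) (hα : 2 ≤ α) (hβ : 2 * α ≤ β)
    (hg1 : 2 * α * s ≤ g) (hg2 : s * (β - 1) / 2 ≤ g) (hbs : β * g * s ≤ b)
    (βe : ℕ → ℕ → ZMod b)
    (hdist : ∀ j l j' l', j < β * s → l < g → j' < β * s → l' < g →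
      βe j l = βe j' l' → j = j' ∧ l = l') :
    ∃ A : ℝ, 0 < A ∧ ∀ w : ℕ, 0 < w →
      (∑' p : {k : Fin s → ℕ //
            k ∈ dualNet b (interlace β s (g * w) fun j => csMatrix b w (g * w) (βe j.1)) ∧
            k ≠ 0} ×
          {l : Fin s → ℕ //
            l ∈ dualNet b (interlace β s (g * w) fun j => csMatrix b w (g * w) (βe j.1)) ∧
            l ≠ 0},
          ‖KhatS b α s p.1.1 p.2.1‖) ≤
        A * Real.log ((b : ℝ) ^ (g * w)) ^ (s - 1) / ((b : ℝ) ^ (g * w)) ^ (2 * α) := by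
  have hb1 : 1 < b := hb.one_lt
  have hg : 0 < g := by
    have : 0 < 2 * α * s := by positivity
    omega
  obtain ⟨C, hC0, hC⟩ := Khat_diag_bound hb1 (show 0 < α by omega)
  obtain ⟨A, hA0, hA⟩ := dual_sum_bound hb hs hα hβ hg hdist
  refine ⟨C ^ s * A, by positivity, fun w hw => ?_⟩
  set T : Set (Fin s → ℕ) := {k | k ∈ dualNet b (interlace β s (g * w)
    fun j => csMatrix b w (g * w) (βe j.1)) ∧ k ≠ 0} with hT
  have hfin : T.Finite := by
    refine Set.Finite.subset (Set.Finite.pi' fun _ : Fin s => Set.finite_Iio (b ^ (β * (g * w))))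
      fun k hk j => hk.1.1 j
  -- two distinct elements of the dual net differ in more than `2α` digits in some coordinate
  have hoff : ∀ k ∈ T, ∀ l ∈ T, k ≠ l → KhatS b α s k l = 0 := by
    intro k hk l hl hne
    have hj : ∃ j, 2 * α < hd b (β * (g * w)) (k j) (l j) := by
      by_contra hcon
      push Not at hcon
      refine hne (dual_eq_of_hamming hb (by omega) hw hdist k l hk.1 hl.1 ?_)
      refine (Finset.sum_le_card_nsmul _ _ (2 * α) fun j _ => hcon j).trans ?_
      simpa [mul_comm] using hg1
    obtain ⟨j, hj⟩ := hj
    rw [KhatS_eq_prod]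
    exact Finset.prod_eq_zero (Finset.mem_univ j) (Khat_zero hb1 _ _ _ hj)
  have hdiag : ∀ k, ‖KhatS b α s k k‖ ≤
      C ^ s * ((b : ℝ) ^ (2 * ∑ j, mu b α (β * (g * w)) (k j)))⁻¹ := by
    intro k
    rw [KhatS_eq_prod, norm_prod]
    refine (Finset.prod_le_prod (fun _ _ => norm_nonneg _)
      fun j _ => hC (β * (g * w)) (k j)).trans (le_of_eq ?_)
    rw [Finset.prod_mul_distrib, Finset.prod_const, Finset.card_univ, Fintype.card_fin,
      Finset.prod_inv_distrib, Finset.prod_pow_eq_pow_sum, ← Finset.mul_sum]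
  have : Fintype T := hfin.fintype
  change (∑' p : T × T, ‖KhatS b α s p.1.1 p.2.1‖) ≤ _
  rw [tsum_fintype, Fintype.sum_prod_type]
  have h1 : ∀ k : T, ∑ l : T, ‖KhatS b α s k.1 l.1‖ = ‖KhatS b α s k.1 k.1‖ := by
    intro k
    refine Finset.sum_eq_single k (fun l _ hlk => ?_) (fun h => absurd (Finset.mem_univ _) h)
    rw [hoff k.1 k.2 l.1 l.2 (fun h => hlk (Subtype.ext h.symm)), norm_zero]
  simp only [h1]
  have h2 := hA w hw T.toFinset fun k hk => by simpa [hT] using hk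
  calc ∑ k : T, ‖KhatS b α s k.1 k.1‖
      ≤ ∑ k : T, C ^ s * ((b : ℝ) ^ (2 * ∑ j, mu b α (β * (g * w)) (k.1 j)))⁻¹ :=
        Finset.sum_le_sum fun k _ => hdiag k.1
    _ = C ^ s * ∑ k ∈ T.toFinset, ((b : ℝ) ^ (2 * ∑ j, mu b α (β * (g * w)) (k j)))⁻¹ := by
        rw [← Finset.mul_sum]
        congr 1
        exact (Finset.sum_subtype T.toFinset (fun x => Set.mem_toFinset)
          (fun k => ((b : ℝ) ^ (2 * ∑ j, mu b α (β * (g * w)) (k j)))⁻¹)).symm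
    _ ≤ C ^ s * (A * Real.log ((b : ℝ) ^ (g * w)) ^ (s - 1) /
          ((b : ℝ) ^ (g * w)) ^ (2 * α)) := by gcongr
    _ = _ := by ring
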